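/- arXiv:2108.13927 — 3 statements merged into one kernel-verified Lean document; each statement's English description precedes it below -/
import Mathlib

section
/- For every natural number c and every integer n ≥ c+2, writing n' = n−c−1, the reset threshold of the partial finite automaton C_n^c equals n'·(n'−1) + c + 1 + f_c(n'). -/
/-- Partial transition function of the PFA `C_n^c`. `false` is letter `a`, `true` is letter `b`. -/
def cernyStep (c n q : ℕ) : Bool → Option ℕ
  | false =>
      if q ≤ n - c - 1 then some (q + 1)
      else if q = n then some 1 else none
  | true =>
      if q ≤ n - c - 1 then some q
      else if q = n then some 1 else some (q + 1)

/-- Action of a word on a state (`none` if undefined at some step). -/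
def cernyRun (c n : ℕ) (q : ℕ) (w : List Bool) : Option ℕ :=
  List.foldlM (cernyStep c n) q w

/-- A word is synchronizing for `C_n^c`. -/
def IsSync (c n : ℕ) (w : List Bool) : Prop :=
  ∃ qs : ℕ, ∀ q ∈ Finset.Icc 1 n, cernyRun c n q w = some qs

/-- The reset threshold of `C_n^c`: minimal length of a synchronizing word. -/
noncomputable def resetThreshold (c n : ℕ) : ℕ :=
  sInf { L : ℕ | ∃ w : List Bool, w.length = L ∧ IsSync c n w }

/-- The solution `f_c` of the pawn race problem:
`f_c(1) = 0` and `f_c(n) = min { f_c(i) + f_c(n-i) + (c+1)·n - i | 1 ≤ i ≤ n-1 }` for `n ≥ 2`. -/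
def fc (c : ℕ) : ℕ → ℕ
  | 0 => 0
  | 1 => 0
  | n + 2 =>
      (Finset.Icc 1 (n + 1)).attach.inf'
        (Finset.attach_nonempty_iff.mpr ⟨1, by simp⟩)
        (fun i => fc c i.1 + fc c (n + 2 - i.1) + (c + 1) * (n + 2) - i.1)
termination_by n => n
decreasing_by
  all_goals
    have h := i.2
    simp only [Finset.mem_Icc] at h
    omega

/-!
Put a token on every state and let `m = n - c - 1`. Nothing is gained before `b ^ (c + 1)` has
emptied the hole formed by the last `c + 1` states; this accounts for the summand `c + 1`.

For the lower bound, lift the circle of states to `ℕ` and follow the remaining `m` tokens, the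
pawns. On the circle of length `m + 1` in which the hole is contracted to a point, every `a` moves
every pawn by one, and every passage through the hole by letters `b` gains at most one more. So the
pawns can meet only after `m - 1` laps, which take `m * (m - 1)` letters `a`. The letters `b` are
counted by induction over the mergings of groups of pawns: two distinct groups that end up together
never use the same `b`, and each group has to be moved through the hole in every lap, which gives
the recursion that defines `fc`.

For the upper bound, play an optimal pawn race in rounds of `m` letters `a`. In the frame that
advances by one square per round, a token that gets `c + 1` letters `b` in the hole makes a move,
and a token that gets only `c` letters `b` stays where it is.
-/

section Automaton

variable {m c q : ℕ}

lemma cernyStep_a_of_le (hq : q ≤ m) : cernyStep c (m + c + 1) q false = some (q + 1) := by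
  have hm : m + c + 1 - c - 1 = m := by omega
  simp [cernyStep, hm, hq]

lemma cernyStep_a_of_lt_of_lt (h₁ : m < q) (h₂ : q < m + c + 1) :
    cernyStep c (m + c + 1) q false = none := by
  have hm : m + c + 1 - c - 1 = m := by omega
  simp [cernyStep, hm, h₁.not_ge, h₂.ne]

lemma cernyStep_a_last : cernyStep c (m + c + 1) (m + c + 1) false = some 1 := by
  simp [cernyStep]

lemma cernyStep_b_of_le (hq : q ≤ m) : cernyStep c (m + c + 1) q true = some q := by
  have hm : m + c + 1 - c - 1 = m := by omega
  simp [cernyStep, hm, hq]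

lemma cernyStep_b_of_lt_of_lt (h₁ : m < q) (h₂ : q < m + c + 1) :
    cernyStep c (m + c + 1) q true = some (q + 1) := by
  have hm : m + c + 1 - c - 1 = m := by omega
  simp [cernyStep, hm, h₁.not_ge, h₂.ne]

lemma cernyStep_b_last : cernyStep c (m + c + 1) (m + c + 1) true = some 1 := by
  simp [cernyStep]

lemma cernyRun_cons (c n q : ℕ) (l : Bool) (w : List Bool) :
    cernyRun c n q (l :: w) = (cernyStep c n q l).bind fun q' ↦ cernyRun c n q' w :=
  List.foldlM_cons

lemma cernyRun_append (c n q : ℕ) (v w : List Bool) :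
    cernyRun c n q (v ++ w) = (cernyRun c n q v).bind fun q' ↦ cernyRun c n q' w :=
  List.foldlM_append

lemma cernyRun_singleton (c n q : ℕ) (l : Bool) : cernyRun c n q [l] = cernyStep c n q l := by
  simp [cernyRun]

end Automaton

lemma fc_one (c : ℕ) : fc c 1 = 0 := by rw [fc]

lemma isLeast_fc_add_two (c k : ℕ) :
    IsLeast {x | ∃ i j, i + j = k ∧
      fc c (i + 1) + fc c (j + 1) + (c + 1) * (j + 1) + c * (i + 1) = x} (fc c (k + 2)) := by
  have split_cost (i j : ℕ) :
      fc c (i + 1) + fc c (j + 1) + (c + 1) * (i + j + 2) - (i + 1) =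
        fc c (i + 1) + fc c (j + 1) + (c + 1) * (j + 1) + c * (i + 1) := by
    have : (c + 1) * (i + j + 2) = (c + 1) * (j + 1) + c * (i + 1) + (i + 1) := by ring
    omega
  rw [fc]
  constructor
  · obtain ⟨⟨a, ha⟩, -, h⟩ := Finset.exists_mem_eq_inf'
      (Finset.attach_nonempty_iff.mpr ⟨1, by simp⟩) fun i : Finset.Icc 1 (k + 1) ↦
        fc c i + fc c (k + 2 - i) + (c + 1) * (k + 2) - i
    rw [Finset.mem_Icc] at ha
    obtain ⟨i, rfl⟩ := Nat.exists_eq_add_of_le' ha.1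
    obtain ⟨j, rfl⟩ := Nat.exists_eq_add_of_le (Nat.add_le_add_iff_right.mp ha.2)
    refine ⟨i, j, rfl, ?_⟩
    rw [h, ← split_cost, show i + j + 2 - (i + 1) = j + 1 by omega]
  · rintro _ ⟨i, j, rfl, rfl⟩
    rw [← split_cost]
    refine (Finset.inf'_le _ (Finset.mem_attach _ ⟨i + 1, by simp⟩)).trans_eq ?_
    rw [show i + j + 2 - (i + 1) = j + 1 by omega]

lemma succ_mod_div_of_ne {N z : ℕ} (h : z % (N + 1) ≠ N) :
    (z + 1) % (N + 1) = z % (N + 1) + 1 ∧ (z + 1) / (N + 1) = z / (N + 1) := by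
  have hmod : (z + 1) % (N + 1) = z % (N + 1) + 1 := by
    have : z % (N + 1) < N + 1 := Nat.mod_lt z N.succ_pos
    rw [← Nat.mod_add_mod, Nat.mod_eq_of_lt (by omega)]
  exact ⟨hmod, Nat.succ_div_of_mod_ne_zero (by omega)⟩

lemma succ_mod_div_of_eq {N z : ℕ} (h : z % (N + 1) = N) :
    (z + 1) % (N + 1) = 0 ∧ (z + 1) / (N + 1) = z / (N + 1) + 1 := by
  have hmod : (z + 1) % (N + 1) = 0 := by rw [← Nat.mod_add_mod, h, Nat.mod_self]
  exact ⟨hmod, Nat.succ_div_of_mod_eq_zero hmod⟩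

lemma count_add_count_le_count {p q r : ℕ → Prop} [DecidablePred p] [DecidablePred q]
    [DecidablePred r] {n : ℕ} (hpr : ∀ k < n, p k → r k) (hqr : ∀ k < n, q k → r k)
    (hpq : ∀ k < n, p k → ¬ q k) : Nat.count p n + Nat.count q n ≤ Nat.count r n := by
  simp only [Nat.count_eq_card_filter_range]
  rw [← Finset.card_union_of_disjoint]
  · refine Finset.card_le_card fun k hk ↦ ?_
    simp only [Finset.mem_union, Finset.mem_filter, Finset.mem_range] at hk ⊢
    grind
  · rw [Finset.disjoint_filter]
    exact fun k hk ↦ hpq k (Finset.mem_range.mp hk)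

lemma exists_eq_and_succ_ne {α : Type*} {f : ℕ → α} {u d : ℕ} (h : f (u + d) ≠ f u) :
    ∃ i < d, f (u + i) = f u ∧ f (u + i + 1) ≠ f u := by
  induction d with
  | zero => exact absurd rfl h
  | succ d ih =>
    by_cases hd : f (u + d) = f u
    · exact ⟨d, d.lt_succ_self, hd, h⟩
    · obtain ⟨i, hi, hfi⟩ := ih hd
      exact ⟨i, by omega, hfi⟩

/-- The hole: the states `m + 1, …, m + c + 1`, on which `b` moves and `a` is undefined except at
the last one. States are lifted to `ℕ`, the state `q` to the positions `≡ q - 1 mod m + c + 1`. -/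
abbrev InHole (m c z : ℕ) : Prop := m ≤ z % (m + c + 1)

/-- The letter `l` is defined at the lifted position `z`. -/
abbrev StepDefined (m c : ℕ) (l : Bool) (z : ℕ) : Prop :=
  l = false → ¬ InHole m c z ∨ z % (m + c + 1) = m + c

/-- Lift of the transition function to `ℕ`, made total by letting `a` move on all of the hole. -/
def liftStep (m c : ℕ) (l : Bool) (z : ℕ) : ℕ :=
  if l = false ∨ InHole m c z then z + 1 else z

/-- Lifted position reached from `z` after the first `t` letters of the infinite word `w`. -/
def liftRun (m c : ℕ) (w : ℕ → Bool) : ℕ → ℕ → ℕ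
  | 0, z => z
  | t + 1, z => liftStep m c (w t) (liftRun m c w t z)

/-- The first `t` letters of `w` are defined along the run that starts at `z`. -/
def RunDefined (m c : ℕ) (w : ℕ → Bool) (t z : ℕ) : Prop :=
  ∀ r < t, StepDefined m c (w r) (liftRun m c w r z)

/-- The position of `z` on the circle of length `m + 1` obtained by contracting the hole to a point,
again lifted to `ℕ`. -/
def collapse (m c z : ℕ) : ℕ :=
  (m + 1) * (z / (m + c + 1)) + min (z % (m + c + 1)) m

section Lift

variable {m c : ℕ} {l : Bool} {w : ℕ → Bool} {p q s t z : ℕ}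

lemma RunDefined.mono (h : RunDefined m c w t z) (hst : s ≤ t) : RunDefined m c w s z :=
  fun r hr ↦ h r (hr.trans_le hst)

lemma liftStep_a (m c z : ℕ) : liftStep m c false z = z + 1 := by simp [liftStep]

lemma liftStep_b_of_inHole (h : InHole m c z) : liftStep m c true z = z + 1 := by
  simp [liftStep, h]

lemma liftStep_b_of_not_inHole (h : ¬ InHole m c z) : liftStep m c true z = z := by
  simp [liftStep, h]

lemma le_liftStep : z ≤ liftStep m c l z := by
  unfold liftStep
  split_ifs <;> omega

lemma liftStep_le : liftStep m c l z ≤ z + 1 := by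
  unfold liftStep
  split_ifs <;> omega

lemma liftStep_monotone (m c : ℕ) (l : Bool) : Monotone (liftStep m c l) := by
  intro p q h
  obtain rfl | h := h.eq_or_lt
  · rfl
  · exact liftStep_le.trans (h.trans_le le_liftStep)

lemma liftRun_monotone (m c : ℕ) (w : ℕ → Bool) (t : ℕ) : Monotone (liftRun m c w t) := by
  induction t with
  | zero => exact monotone_id
  | succ t ih => exact (liftStep_monotone m c (w t)).comp ih

lemma liftRun_eq_of_le (hst : s ≤ t) (h : liftRun m c w s p = liftRun m c w s q) :
    liftRun m c w t p = liftRun m c w t q := by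
  induction t, hst using Nat.le_induction with
  | base => exact h
  | succ t _ ih => simp only [liftRun, ih]

lemma liftRun_add_mul (k : ℕ) :
    liftRun m c w t (z + (m + c + 1) * k) = liftRun m c w t z + (m + c + 1) * k := by
  induction t with
  | zero => rfl
  | succ t ih =>
    simp only [liftRun, ih, liftStep, InHole, Nat.add_mul_mod_self_left]
    split_ifs <;> omega

lemma collapse_add (m c z : ℕ) : collapse m c (z + (m + c + 1)) = collapse m c z + (m + 1) := by
  rw [collapse, collapse, Nat.add_mod_right, Nat.add_div_right _ (by omega)]
  ring

lemma collapse_of_inHole (h : InHole m c z) :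
    collapse m c z = (m + 1) * (z / (m + c + 1)) + m := by
  rw [collapse, min_eq_right h]

lemma collapse_succ (h : ¬ InHole m c z ∨ z % (m + c + 1) = m + c) :
    collapse m c (z + 1) = collapse m c z + 1 := by
  unfold collapse
  by_cases hlast : z % (m + c + 1) = m + c
  · obtain ⟨hmod, hdiv⟩ := succ_mod_div_of_eq hlast
    rw [hmod, hdiv, hlast, Nat.mul_add]
    omega
  · obtain ⟨hmod, hdiv⟩ := succ_mod_div_of_ne hlast
    rw [hmod, hdiv]
    omega

lemma collapse_succ_of_inHole (h : InHole m c z) (hlast : z % (m + c + 1) ≠ m + c) :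
    collapse m c (z + 1) = collapse m c z := by
  obtain ⟨hmod, hdiv⟩ := succ_mod_div_of_ne hlast
  rw [collapse, collapse, hmod, hdiv]
  omega

lemma collapse_monotone (m c : ℕ) : Monotone (collapse m c) := by
  refine monotone_nat_of_le_succ fun z ↦ ?_
  by_cases h : ¬ InHole m c z ∨ z % (m + c + 1) = m + c
  · rw [collapse_succ h]
    omega
  · push Not at h
    rw [collapse_succ_of_inHole h.1 h.2]

lemma collapse_lt_collapse (hp : ¬ InHole m c p) (hpq : p < q) :
    collapse m c p < collapse m c q :=
  calc collapse m c p < collapse m c (p + 1) := by rw [collapse_succ (.inl hp)]; omega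
    _ ≤ collapse m c q := collapse_monotone m c hpq

lemma collapse_add_mul_le (m c z : ℕ) : collapse m c z + c * (z / (m + c + 1)) ≤ z := by
  conv_rhs => rw [← Nat.div_add_mod z (m + c + 1)]
  have : (m + c + 1) * (z / (m + c + 1)) =
      (m + 1) * (z / (m + c + 1)) + c * (z / (m + c + 1)) := by ring
  unfold collapse
  omega

lemma collapse_liftStep_bounds (h : StepDefined m c l z) :
    collapse m c z + (if l = false then 1 else 0) ≤ collapse m c (liftStep m c l z) ∧
    collapse m c (liftStep m c l z) + z / (m + c + 1) ≤
      collapse m c z + (if l = false then 1 else 0) + liftStep m c l z / (m + c + 1) := by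
  have hdiv : z / (m + c + 1) ≤ liftStep m c l z / (m + c + 1) :=
    Nat.div_le_div_right le_liftStep
  cases l with
  | false =>
    rw [liftStep_a] at hdiv ⊢
    rw [collapse_succ (h rfl), if_pos rfl]
    omega
  | true =>
    by_cases hz : InHole m c z
    · rw [liftStep_b_of_inHole hz] at hdiv ⊢
      by_cases hlast : z % (m + c + 1) = m + c
      · rw [collapse_succ (.inr hlast), (succ_mod_div_of_eq hlast).2]
        simp only [Bool.true_eq_false, if_false]
        omega
      · rw [collapse_succ_of_inHole hz hlast]
        simp only [Bool.true_eq_false, if_false]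
        omega
    · rw [liftStep_b_of_not_inHole hz]
      simp

lemma collapse_liftRun_bounds (h : RunDefined m c w t z) :
    collapse m c z + Nat.count (w · = false) t ≤ collapse m c (liftRun m c w t z) ∧
    collapse m c (liftRun m c w t z) + z / (m + c + 1) ≤
      collapse m c z + Nat.count (w · = false) t + liftRun m c w t z / (m + c + 1) := by
  induction t with
  | zero => simp [liftRun]
  | succ t ih =>
    have ih := ih (h.mono t.le_succ)
    have hstep := collapse_liftStep_bounds (h t t.lt_succ_self)
    simp only [Nat.count_succ, liftRun]
    omega

/-- Two tokens have met, or are still apart after the hole is contracted. In the second case they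
are not both in the hole unless they are in different laps. -/
def MetOrApart (m c p q : ℕ) : Prop := p = q ∨ collapse m c p < collapse m c q

lemma MetOrApart.step (hm : 0 < m) (hp : StepDefined m c l p) (hq : StepDefined m c l q)
    (h : MetOrApart m c p q) : MetOrApart m c (liftStep m c l p) (liftStep m c l q) := by
  obtain rfl | h := h
  · exact .inl rfl
  cases l with
  | false =>
    right
    rw [liftStep_a, liftStep_a, collapse_succ (hp rfl), collapse_succ (hq rfl)]
    omega
  | true =>
    have hpq : p < q := (collapse_monotone m c).reflect_lt h
    have hle : collapse m c q ≤ collapse m c (liftStep m c true q) :=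
      collapse_monotone m c le_liftStep
    by_cases hhole : InHole m c p
    · rw [liftStep_b_of_inHole hhole]
      by_cases hlast : p % (m + c + 1) = m + c
      · have hout : ¬ InHole m c (p + 1) := by
          rw [InHole, (succ_mod_div_of_eq hlast).1]
          omega
        obtain rfl | hlt := Nat.succ_le_of_lt hpq |>.eq_or_lt
        · exact .inl (liftStep_b_of_not_inHole hout).symm
        · exact .inr ((collapse_lt_collapse hout hlt).trans_le hle)
      · exact .inr ((collapse_succ_of_inHole hhole hlast).trans_lt (h.trans_le hle))
    · rw [liftStep_b_of_not_inHole hhole]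
      exact .inr (h.trans_le hle)

lemma MetOrApart.run (hm : 0 < m) (hp : RunDefined m c w t p) (hq : RunDefined m c w t q)
    (h : MetOrApart m c p q) : MetOrApart m c (liftRun m c w t p) (liftRun m c w t q) := by
  induction t with
  | zero => exact h
  | succ t ih =>
    exact (ih (hp.mono t.le_succ) (hq.mono t.le_succ)).step hm
      (hp t t.lt_succ_self) (hq t t.lt_succ_self)

lemma MetOrApart.eq_of_inHole (hpq : MetOrApart m c p q)
    (hqp : MetOrApart m c q (p + (m + c + 1))) (hne : q ≠ p + (m + c + 1)) (hp : InHole m c p)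
    (hq : InHole m c q) : p = q := by
  refine hpq.resolve_right fun hlt ↦ ?_
  have hlt' := hqp.resolve_left hne
  rw [collapse_add] at hlt'
  rw [collapse_of_inHole hp, collapse_of_inHole hq] at hlt hlt'
  have h₁ : p / (m + c + 1) < q / (m + c + 1) := by nlinarith
  nlinarith

end Lift

/-! ### The lower bound -/

/-- Lifted starting position of pawn `u ∈ ℕ`: the pawns are the lifts of the states `1, …, m`, in
increasing order. -/
def pawnStart (m c u : ℕ) : ℕ := u + (c + 1) * (u / m)

/-- Lifted position of pawn `u` after the first `t` letters of `w`. -/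
def pawnPos (m c : ℕ) (w : ℕ → Bool) (t u : ℕ) : ℕ := liftRun m c w t (pawnStart m c u)

/-- Letter `t` of `w` is a `b` which moves one of the pawns `u, …, u + d`. -/
abbrev MovesByB (m c : ℕ) (w : ℕ → Bool) (u d t : ℕ) : Prop :=
  w t = true ∧ ∃ v ∈ Finset.Icc u (u + d), InHole m c (pawnPos m c w t v)

section Pawns

variable {m c : ℕ} {w : ℕ → Bool} {d r s t u v : ℕ}

lemma pawnStart_eq (m c u : ℕ) : pawnStart m c u = u % m + (m + c + 1) * (u / m) := by
  have := Nat.mod_add_div u m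
  unfold pawnStart
  linarith

lemma pawnStart_add (hm : 0 < m) : pawnStart m c (u + m) = pawnStart m c u + (m + c + 1) := by
  rw [pawnStart, pawnStart, Nat.add_div_right _ hm]
  ring

lemma pawnStart_add_le (m c u d : ℕ) : pawnStart m c u + d ≤ pawnStart m c (u + d) := by
  have : (c + 1) * (u / m) ≤ (c + 1) * ((u + d) / m) :=
    Nat.mul_le_mul_left _ (Nat.div_le_div_right (Nat.le_add_right u d))
  unfold pawnStart
  omega

lemma pawnStart_strictMono (m c : ℕ) : StrictMono (pawnStart m c) :=
  strictMono_nat_of_lt_succ fun u ↦ pawnStart_add_le m c u 1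

lemma pawnStart_mod (hm : 0 < m) : pawnStart m c u % (m + c + 1) = u % m := by
  have := Nat.mod_lt u hm
  rw [pawnStart_eq, Nat.add_mul_mod_self_left, Nat.mod_eq_of_lt (by omega)]

lemma pawnStart_div (hm : 0 < m) : pawnStart m c u / (m + c + 1) = u / m := by
  have := Nat.mod_lt u hm
  rw [pawnStart_eq, Nat.add_mul_div_left _ _ (by omega), Nat.div_eq_of_lt (by omega), zero_add]

lemma collapse_pawnStart (hm : 0 < m) : collapse m c (pawnStart m c u) = u + u / m := by
  rw [collapse, pawnStart_mod hm, pawnStart_div hm, min_eq_left (Nat.mod_lt u hm).le, Nat.add_mul]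
  have := Nat.div_add_mod u m
  omega

lemma pawnPos_succ (m c : ℕ) (w : ℕ → Bool) (t u : ℕ) :
    pawnPos m c w (t + 1) u = liftStep m c (w t) (pawnPos m c w t u) := rfl

lemma pawnPos_monotone (m c : ℕ) (w : ℕ → Bool) (t : ℕ) : Monotone (pawnPos m c w t) :=
  (liftRun_monotone m c w t).comp (pawnStart_strictMono m c).monotone

lemma pawnPos_add (hm : 0 < m) : pawnPos m c w t (u + m) = pawnPos m c w t u + (m + c + 1) := by
  rw [pawnPos, pawnPos, pawnStart_add hm]
  simpa using liftRun_add_mul 1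

lemma pawnPos_eq_of_le (hst : s ≤ t) (h : pawnPos m c w s u = pawnPos m c w s v) :
    pawnPos m c w t u = pawnPos m c w t v :=
  liftRun_eq_of_le hst h

lemma le_collapse_pawnPos (hm : 0 < m) (hu : RunDefined m c w t (pawnStart m c u)) :
    u + u / m + Nat.count (w · = false) t ≤ collapse m c (pawnPos m c w t u) := by
  rw [← collapse_pawnStart (c := c) hm]
  exact (collapse_liftRun_bounds hu).1

lemma collapse_pawnPos_le (hm : 0 < m) (hu : RunDefined m c w t (pawnStart m c u)) :
    collapse m c (pawnPos m c w t u) ≤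
      u + Nat.count (w · = false) t + pawnPos m c w t u / (m + c + 1) := by
  have h := (collapse_liftRun_bounds hu).2
  rw [collapse_pawnStart hm, pawnStart_div hm] at h
  rw [pawnPos]
  omega

lemma mul_div_pawnPos_le (hm : 0 < m) (hu : RunDefined m c w t (pawnStart m c u)) :
    m * (pawnPos m c w t u / (m + c + 1)) ≤ u + Nat.count (w · = false) t := by
  have h := collapse_pawnPos_le hm hu
  rw [collapse, Nat.add_mul] at h
  omega

lemma div_le_div_pawnPos_of_meet (hm : 0 < m)
    (hdef : ∀ v, RunDefined m c w t (pawnStart m c v))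
    (hmeet : pawnPos m c w t u = pawnPos m c w t (u + d)) :
    d + (u + d) / m ≤ pawnPos m c w t (u + d) / (m + c + 1) := by
  have hback := collapse_pawnPos_le hm (hdef u)
  have hfront := le_collapse_pawnPos hm (hdef (u + d))
  rw [hmeet] at hback
  omega

/-- Each lap takes `c` moves that do not show on the contracted circle. -/
lemma pawnStart_add_le_pawnPos_of_meet (hm : 0 < m)
    (hdef : ∀ v, RunDefined m c w t (pawnStart m c v))
    (hmeet : pawnPos m c w t u = pawnPos m c w t (u + d)) :
    pawnStart m c (u + d) + Nat.count (w · = false) t + c * d ≤ pawnPos m c w t (u + d) := by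
  have hfront := le_collapse_pawnPos hm (hdef (u + d))
  have hcollapse := collapse_add_mul_le m c (pawnPos m c w t (u + d))
  have hlaps := Nat.mul_le_mul_left c (div_le_div_pawnPos_of_meet hm hdef hmeet)
  unfold pawnStart
  linarith

lemma pawnPos_eq_of_inHole (hm : 0 < m)
    (hdef : ∀ v, RunDefined m c w t (pawnStart m c v)) (huv : u < v) (hvu : v < u + m)
    (hmeet : pawnPos m c w t u = pawnPos m c w t v) (hrt : r ≤ t)
    (hu : InHole m c (pawnPos m c w r u)) (hv : InHole m c (pawnPos m c w r v)) :
    pawnPos m c w r u = pawnPos m c w r v := by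
  have hdef_r (v : ℕ) := (hdef v).mono hrt
  have apart {a b : ℕ} (hab : a < b) :
      MetOrApart m c (pawnPos m c w r a) (pawnPos m c w r b) := by
    refine MetOrApart.run hm (hdef_r a) (hdef_r b) (.inr ?_)
    have := Nat.div_le_div_right (c := m) hab.le
    rw [collapse_pawnStart hm, collapse_pawnStart hm]
    omega
  refine (apart huv).eq_of_inHole (by simpa only [pawnPos_add hm] using apart hvu) ?_ hu hv
  intro hlap
  rw [← pawnPos_add hm] at hlap
  have := pawnPos_eq_of_le hrt hlap
  rw [pawnPos_add hm] at this
  omega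

lemma count_movesByB_add_pawnPos_succ_le (m c : ℕ) (w : ℕ → Bool) (u d t : ℕ) :
    Nat.count (MovesByB m c w u d) t + Nat.count (w · = false) t + pawnPos m c w (t + 1) u ≤
      Nat.count (MovesByB m c w u d) (t + 1) + Nat.count (w · = false) (t + 1) +
        pawnPos m c w t u := by
  rw [Nat.count_succ, Nat.count_succ, pawnPos_succ]
  by_cases hw : w t = false
  · have := liftStep_le (m := m) (c := c) (l := w t) (z := pawnPos m c w t u)
    rw [if_pos hw]
    omega
  · by_cases hu : InHole m c (pawnPos m c w t u)
    · have := liftStep_le (m := m) (c := c) (l := w t) (z := pawnPos m c w t u)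
      rw [if_pos ⟨Bool.eq_true_of_not_eq_false hw, u, by simp, hu⟩]
      omega
    · have : liftStep m c (w t) (pawnPos m c w t u) = pawnPos m c w t u :=
        if_neg (not_or_intro hw hu)
      omega

lemma count_movesByB_add_le {i j : ℕ} (hm : 0 < m) (hd : i + j + 1 < m)
    (hdef : ∀ v, RunDefined m c w (t + 1) (pawnStart m c v))
    (hmeet : pawnPos m c w (t + 1) u = pawnPos m c w (t + 1) (u + (i + j + 1)))
    (hsplit : pawnPos m c w t (u + i) < pawnPos m c w t (u + i + 1)) :
    Nat.count (MovesByB m c w u i) (t + 1) + Nat.count (MovesByB m c w (u + i + 1) j) (t + 1) ≤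
      Nat.count (MovesByB m c w u (i + j + 1)) (t + 1) := by
  refine count_add_count_le_count ?_ ?_ ?_
  · rintro r - ⟨hw, v, hv, hhole⟩
    rw [Finset.mem_Icc] at hv
    exact ⟨hw, v, Finset.mem_Icc.mpr (by omega), hhole⟩
  · rintro r - ⟨hw, v, hv, hhole⟩
    rw [Finset.mem_Icc] at hv
    exact ⟨hw, v, Finset.mem_Icc.mpr (by omega), hhole⟩
  · rintro r hr ⟨-, v₁, hv₁, hhole₁⟩ ⟨-, v₂, hv₂, hhole₂⟩
    rw [Finset.mem_Icc] at hv₁ hv₂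
    have mono := pawnPos_monotone m c w
    have hmeet' : pawnPos m c w (t + 1) v₁ = pawnPos m c w (t + 1) v₂ := by
      have := mono (t + 1) hv₁.1
      have := mono (t + 1) (show v₁ ≤ v₂ by omega)
      have := mono (t + 1) (show v₂ ≤ u + (i + j + 1) by omega)
      omega
    have hmet := pawnPos_eq_of_le (Nat.le_of_lt_succ hr) <|
      pawnPos_eq_of_inHole hm hdef (by omega) (by omega) hmeet' hr.le hhole₁ hhole₂
    exact (((mono t hv₁.2).trans_lt hsplit).trans_le (mono t hv₂.1)).ne hmet

lemma exists_split_of_meet_succ (hmeet : pawnPos m c w (t + 1) u = pawnPos m c w (t + 1) (u + d))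
    (hne : pawnPos m c w t (u + d) ≠ pawnPos m c w t u) :
    ∃ i j, d = i + j + 1 ∧ pawnPos m c w t u = pawnPos m c w t (u + i) ∧
      pawnPos m c w t (u + i) < pawnPos m c w t (u + i + 1) ∧
      pawnPos m c w t (u + i + 1) = pawnPos m c w t (u + i + 1 + j) := by
  obtain ⟨i, hi, heq, hjump⟩ := exists_eq_and_succ_ne hne
  obtain ⟨j, rfl⟩ := Nat.exists_eq_add_of_lt hi
  have mono := pawnPos_monotone m c w t
  have hle : pawnPos m c w t (u + (i + j + 1)) ≤ pawnPos m c w t u + 1 :=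
    calc pawnPos m c w t (u + (i + j + 1)) ≤ pawnPos m c w (t + 1) (u + (i + j + 1)) :=
          le_liftStep
      _ = pawnPos m c w (t + 1) u := hmeet.symm
      _ ≤ pawnPos m c w t u + 1 := liftStep_le
  have h₁ := mono (show u + i ≤ u + i + 1 by omega)
  have h₂ := mono (show u + i + 1 ≤ u + i + 1 + j by omega)
  rw [show u + (i + j + 1) = u + i + 1 + j by omega] at hle
  exact ⟨i, j, rfl, heq.symm, by omega, by omega⟩

/-- At the letter that makes the group meet, a back group `u, …, u + i` catches up with a front
group `u + i + 1, …, u + d`. The two groups never used the same `b`, so their costs add up. -/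
lemma fc_add_pawnPos_le (hm : 0 < m) (hdef : ∀ v, RunDefined m c w t (pawnStart m c v))
    (hd : d < m) (hmeet : pawnPos m c w t u = pawnPos m c w t (u + d)) :
    fc c (d + 1) + pawnPos m c w t u ≤
      Nat.count (MovesByB m c w u d) t + Nat.count (w · = false) t + pawnStart m c u +
        (c + 1) * d := by
  induction t generalizing u d with
  | zero =>
    obtain rfl : d = 0 := by
      have : u = u + d := (pawnStart_strictMono m c).injective hmeet
      omega
    simp [pawnPos, liftRun, fc_one]
  | succ t ih =>
    have ih {u d : ℕ} := ih (u := u) (d := d) fun v ↦ (hdef v).mono t.le_succ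
    by_cases hmet : pawnPos m c w t (u + d) = pawnPos m c w t u
    · have := ih hd hmet.symm
      have := count_movesByB_add_pawnPos_succ_le m c w u d t
      omega
    obtain ⟨i, j, rfl, hback, hsplit, hfront⟩ := exists_split_of_meet_succ hmeet hmet
    have cost_back := ih (by omega) hback
    have cost_front := ih (by omega) hfront
    have step_back := count_movesByB_add_pawnPos_succ_le m c w u i t
    have step_front := count_movesByB_add_pawnPos_succ_le m c w (u + i + 1) j t
    have cost_add := count_movesByB_add_le hm hd hdef hmeet hsplit
    have front_eq : pawnPos m c w (t + 1) (u + i + 1) = pawnPos m c w (t + 1) u := by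
      have := pawnPos_monotone m c w (t + 1) (show u ≤ u + i + 1 by omega)
      have := pawnPos_monotone m c w (t + 1) (show u + i + 1 ≤ u + (i + j + 1) by omega)
      omega
    have far := pawnStart_add_le_pawnPos_of_meet hm hdef hmeet
    have start_le := pawnStart_add_le m c (u + i + 1) j
    have fc_le := (isLeast_fc_add_two c (i + j)).2 ⟨i, j, rfl, rfl⟩
    rw [← hmeet, show u + (i + j + 1) = u + i + 1 + j by omega] at far
    rw [front_eq] at step_front
    rw [show i + j + 1 + 1 = i + j + 2 by omega]
    linarith

lemma mul_add_fc_le_of_meet (hdef : ∀ v, RunDefined (d + 1) c w t (pawnStart (d + 1) c v))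
    (hu : 0 < u) (hud : u ≤ d + 1)
    (hmeet : pawnPos (d + 1) c w t u = pawnPos (d + 1) c w t (u + d)) :
    (d + 1) * d + fc c (d + 1) ≤ t := by
  have hm := d.succ_pos
  have le_count_a : (d + 1) * d ≤ Nat.count (w · = false) t := by
    have hlap : 1 ≤ (u + d) / (d + 1) := by
      rw [Nat.one_le_div_iff hm]
      omega
    have hlaps := div_le_div_pawnPos_of_meet hm hdef hmeet
    rw [← hmeet] at hlaps
    have hmul := Nat.mul_le_mul_left (d + 1) ((Nat.add_le_add_left hlap d).trans hlaps)
    have := mul_div_pawnPos_le hm (hdef u)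
    linarith
  have fc_le_count_b : fc c (d + 1) ≤ Nat.count (MovesByB (d + 1) c w u d) t := by
    have := fc_add_pawnPos_le hm hdef d.lt_succ_self hmeet
    have := pawnStart_add_le_pawnPos_of_meet hm hdef hmeet
    have := pawnStart_add_le (d + 1) c u d
    linarith
  have count_le : Nat.count (w · = false) t + Nat.count (MovesByB (d + 1) c w u d) t ≤ t := by
    conv_rhs => rw [← Nat.count_true t]
    exact count_add_count_le_count (fun _ _ _ ↦ trivial) (fun _ _ _ ↦ trivial)
      fun _ _ ha hb ↦ Bool.noConfusion (ha.symm.trans hb.1)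
  omega

end Pawns

section LowerBound

variable {m c d : ℕ}

lemma stepDefined_of_cernyStep_eq_some {l : Bool} {z q : ℕ}
    (h : cernyStep c (m + c + 1) (z % (m + c + 1) + 1) l = some q) :
    StepDefined m c l z ∧ q = liftStep m c l z % (m + c + 1) + 1 := by
  have hz : z % (m + c + 1) < m + c + 1 := Nat.mod_lt z (Nat.succ_pos _)
  by_cases hhole : InHole m c z
  · by_cases hlast : z % (m + c + 1) = m + c
    · have hmove : liftStep m c l z = z + 1 := by cases l <;> simp [liftStep, hhole]
      rw [hmove, (succ_mod_div_of_eq hlast).1]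
      rw [hlast] at h
      cases l with
      | false => exact ⟨fun _ ↦ .inr hlast, Option.some.inj (h.symm.trans cernyStep_a_last)⟩
      | true => exact ⟨nofun, Option.some.inj (h.symm.trans cernyStep_b_last)⟩
    · cases l with
      | false =>
        rw [cernyStep_a_of_lt_of_lt (by omega) (by omega)] at h
        cases h
      | true =>
        rw [cernyStep_b_of_lt_of_lt (by omega) (by omega), Option.some_inj] at h
        rw [liftStep_b_of_inHole hhole, (succ_mod_div_of_ne hlast).1]
        exact ⟨nofun, h.symm⟩
  · cases l with
    | false =>
      rw [cernyStep_a_of_le (by omega), Option.some_inj] at h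
      rw [liftStep_a, (succ_mod_div_of_ne (by omega)).1]
      exact ⟨fun _ ↦ .inl hhole, h.symm⟩
    | true =>
      rw [cernyStep_b_of_le (by omega), Option.some_inj] at h
      rw [liftStep_b_of_not_inHole hhole]
      exact ⟨nofun, h.symm⟩

lemma runDefined_of_cernyRun_eq_some {w : ℕ → Bool} {t z q : ℕ}
    (h : cernyRun c (m + c + 1) (z % (m + c + 1) + 1) ((List.range t).map w) = some q) :
    RunDefined m c w t z ∧ q = liftRun m c w t z % (m + c + 1) + 1 := by
  induction t generalizing q with
  | zero => exact ⟨nofun, (Option.some.inj h).symm⟩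
  | succ t ih =>
    rw [List.range_succ, List.map_append, List.map_singleton, cernyRun_append,
      Option.bind_eq_some_iff] at h
    obtain ⟨p, hp, hq⟩ := h
    obtain ⟨hdef, rfl⟩ := ih hp
    rw [cernyRun_singleton] at hq
    obtain ⟨hstep, rfl⟩ := stepDefined_of_cernyStep_eq_some hq
    refine ⟨fun r hr ↦ ?_, rfl⟩
    obtain hlt | rfl := Nat.lt_succ_iff_lt_or_eq.mp hr
    · exact hdef r hlt
    · exact hstep

lemma exists_pawnPos_eq_of_modEq {w : ℕ → Bool} {t : ℕ}
    (h : ∀ u v, pawnPos (d + 1) c w t u ≡ pawnPos (d + 1) c w t v [MOD d + 1 + c + 1]) :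
    ∃ u, 0 < u ∧ u ≤ d + 1 ∧ pawnPos (d + 1) c w t u = pawnPos (d + 1) c w t (u + d) := by
  have hlap (u : ℕ) : pawnPos (d + 1) c w t (u + (d + 1)) =
      pawnPos (d + 1) c w t u + (d + 1 + c + 1) :=
    pawnPos_add d.succ_pos
  obtain ⟨i, hi, heq, hne⟩ := exists_eq_and_succ_ne (d := d + 1)
    (show pawnPos (d + 1) c w t (0 + (d + 1)) ≠ pawnPos (d + 1) c w t 0 by rw [hlap]; omega)
  rw [zero_add] at heq hne
  refine ⟨i + 1, i.succ_pos, hi, ?_⟩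
  have mono := pawnPos_monotone (d + 1) c w t
  have hle : pawnPos (d + 1) c w t (i + 1) ≤ pawnPos (d + 1) c w t (i + (d + 1)) :=
    mono (by omega)
  rw [show i + 1 + d = i + (d + 1) by omega]
  refine hle.antisymm ?_
  rw [hlap, heq]
  have hlt := lt_of_le_of_ne (mono (Nat.zero_le _)) hne.symm
  exact (h 0 (i + 1)).add_le_of_lt hlt

lemma mul_add_fc_le_length_of_low {w : List Bool} {qs : ℕ}
    (h : ∀ q, 1 ≤ q → q ≤ d + 1 → cernyRun c (d + 1 + c + 1) q w = some qs) :
    (d + 1) * d + fc c (d + 1) ≤ w.length := by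
  set W : ℕ → Bool := fun t ↦ w.getD t false
  have hW : (List.range w.length).map W = w :=
    List.ext_getElem (by simp) fun t _ ht ↦ by simp [W, ht]
  have hrun (u : ℕ) : RunDefined (d + 1) c W w.length (pawnStart (d + 1) c u) ∧
      qs = pawnPos (d + 1) c W w.length u % (d + 1 + c + 1) + 1 := by
    refine runDefined_of_cernyRun_eq_some ?_
    rw [hW, pawnStart_mod d.succ_pos]
    exact h _ (Nat.succ_pos _) (Nat.mod_lt u d.succ_pos)
  obtain ⟨u, hu, hud, hmeet⟩ := exists_pawnPos_eq_of_modEq fun u v ↦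
    Nat.succ.inj ((hrun u).2.symm.trans (hrun v).2)
  exact mul_add_fc_le_of_meet (fun u ↦ (hrun u).1) hu hud hmeet

/-- While some token is in the hole, every letter that can be applied keeps the states
`1, …, d + 1` occupied, so that nothing is gained before letters `b` have emptied the hole. -/
lemma mul_add_fc_le_length_add {w : List Bool} {qs j : ℕ} (hj : j ≤ c)
    (hlow : ∀ q, 1 ≤ q → q ≤ d + 1 → cernyRun c (d + 1 + c + 1) q w = some qs)
    (hhole : cernyRun c (d + 1 + c + 1) (d + 2 + j) w = some qs) :
    (d + 1) * d + fc c (d + 1) + (c + 1) ≤ w.length + j := by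
  induction w generalizing j with
  | nil =>
    have h₁ := Option.some.inj (hlow 1 le_rfl (by omega))
    have h₂ := Option.some.inj hhole
    omega
  | cons l w ih =>
    simp only [cernyRun_cons] at hlow hhole
    rw [List.length_cons]
    cases l with
    | true =>
      have hlow' (q : ℕ) (h₁ : 1 ≤ q) (h₂ : q ≤ d + 1) :
          cernyRun c (d + 1 + c + 1) q w = some qs := by
        simpa only [cernyStep_b_of_le h₂, Option.bind_some] using hlow q h₁ h₂
      obtain rfl | hjc := hj.eq_or_lt
      · have := mul_add_fc_le_length_of_low hlow'
        omega
      · rw [cernyStep_b_of_lt_of_lt (by omega) (by omega)] at hhole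
        have := ih (j := j + 1) hjc hlow' hhole
        omega
    | false =>
      obtain rfl | hjc := hj.eq_or_lt
      · rw [show d + 2 + j = d + 1 + j + 1 by omega, cernyStep_a_last] at hhole
        have hshift (q : ℕ) (h₁ : 1 ≤ q) (h₂ : q ≤ d + 1) :
            cernyRun j (d + 1 + j + 1) (q + 1) w = some qs := by
          simpa only [cernyStep_a_of_le h₂, Option.bind_some] using hlow q h₁ h₂
        have := ih (j := 0) (Nat.zero_le _) (fun q h₁ h₂ ↦ by
          obtain rfl | h₁ := h₁.eq_or_lt
          · exact hhole
          · simpa only [Nat.sub_add_cancel h₁.le] using hshift (q - 1) (by omega) (by omega))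
          (hshift (d + 1) (by omega) le_rfl)
        omega
      · rw [cernyStep_a_of_lt_of_lt (by omega) (by omega)] at hhole
        cases hhole

lemma IsSync.le_length {w : List Bool} (h : IsSync c (d + 1 + c + 1) w) :
    (d + 1) * d + c + 1 + fc c (d + 1) ≤ w.length := by
  obtain ⟨qs, h⟩ := h
  have := mul_add_fc_le_length_add (j := 0) (Nat.zero_le c)
    (fun q h₁ h₂ ↦ h q (Finset.mem_Icc.mpr (by omega)))
    (h (d + 2) (Finset.mem_Icc.mpr (by omega)))
  omega

end LowerBound

/-! ### Optimal pawn races and the upper bound -/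

/-- A race of pawns on the squares `0, 1, 2, …`: in each round some of the pawns advance by one
square, and pawns on the same square move together, so that only the sets of occupied squares and
of squares that are left matter. -/
structure PawnRace where
  occupied : ℕ → Finset ℕ
  moves : ℕ → Finset ℕ
  succ_mem {t p : ℕ} : p ∈ moves t → p + 1 ∈ occupied (t + 1)
  mem_of_notMem {t p : ℕ} : p ∈ occupied t → p ∉ moves t → p ∈ occupied (t + 1)

namespace PawnRace

open Finset

variable {R R' : PawnRace} {c i j k r T : ℕ}

/-- Each occupied square costs `c` per round, and one more if its pawns advance. -/
def roundCost (R : PawnRace) (c t : ℕ) : ℕ := c * #(R.occupied t) + #(R.moves t)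

/-- Cost of the first `T` rounds. -/
def cost (R : PawnRace) (c T : ℕ) : ℕ := ∑ t ∈ range T, R.roundCost c t

/-- A single pawn, advancing in every round. -/
def march : PawnRace where
  occupied t := {t}
  moves t := {t}
  succ_mem := by simp
  mem_of_notMem := by simp

/-- A single pawn, staying on the square `p`. -/
def rest (p : ℕ) : PawnRace where
  occupied _ := {p}
  moves _ := ∅
  succ_mem := by simp
  mem_of_notMem h _ := h

/-- Two races on the same board. -/
def union (R R' : PawnRace) : PawnRace where
  occupied t := R.occupied t ∪ R'.occupied t
  moves t := R.moves t ∪ R'.moves t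
  succ_mem h := by
    rw [mem_union] at h ⊢
    exact h.imp R.succ_mem R'.succ_mem
  mem_of_notMem h h' := by
    rw [notMem_union] at h'
    rw [mem_union] at h ⊢
    exact h.imp (R.mem_of_notMem · h'.1) (R'.mem_of_notMem · h'.2)

/-- The race started `k` squares further. -/
def shift (R : PawnRace) (k : ℕ) : PawnRace where
  occupied t := (R.occupied t).map (addRightEmbedding k)
  moves t := (R.moves t).map (addRightEmbedding k)
  succ_mem h := by
    obtain ⟨p, hp, rfl⟩ := mem_map.mp h
    exact mem_map.mpr ⟨p + 1, R.succ_mem hp, Nat.add_right_comm p 1 k⟩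
  mem_of_notMem h h' := by
    obtain ⟨p, hp, rfl⟩ := mem_map.mp h
    exact mem_map_of_mem _ (R.mem_of_notMem hp fun hp' ↦ h' (mem_map_of_mem _ hp'))

/-- The race that follows `R` for `T` rounds and `R'` afterwards. -/
def switch (R R' : PawnRace) (T : ℕ) (h : R.occupied T ⊆ R'.occupied T) : PawnRace where
  occupied t := if t < T then R.occupied t else R'.occupied t
  moves t := if t < T then R.moves t else R'.moves t
  succ_mem {t p} hp := by
    have := @R.succ_mem t p
    have := @R'.succ_mem t p
    grind
  mem_of_notMem {t p} hp hp' := by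
    have := @R.mem_of_notMem t p
    have := @R'.mem_of_notMem t p
    grind

lemma cost_union_le : (R.union R').cost c T ≤ R.cost c T + R'.cost c T := by
  rw [cost, cost, cost, ← sum_add_distrib]
  refine sum_le_sum fun t _ ↦ ?_
  have h₁ := Nat.mul_le_mul_left c (card_union_le (R.occupied t) (R'.occupied t))
  have h₂ := card_union_le (R.moves t) (R'.moves t)
  simp only [roundCost, union]
  linarith

lemma cost_shift : (R.shift k).cost c T = R.cost c T := by
  simp [cost, roundCost, shift]

lemma cost_switch (h : R.occupied T ⊆ R'.occupied T) :
    (R.switch R' T h).cost c (T + r) = R.cost c T + ∑ x ∈ range r, R'.roundCost c (T + x) := by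
  rw [cost, sum_range_add]
  congr 1
  · refine sum_congr rfl fun t ht ↦ ?_
    simp [roundCost, switch, mem_range.mp ht]
  · simp [roundCost, switch]

/-- Pawns from all of the squares `0, …, d` gather on the square `d` in `d` rounds, each on time:
at the beginning of round `t` no pawn is behind the square `t`. -/
structure IsSchedule (R : PawnRace) (d : ℕ) : Prop where
  range_subset : range (d + 1) ⊆ R.occupied 0
  mem_moves : ∀ t < d, t ∈ R.moves t
  occupied_subset : ∀ t ≤ d, R.occupied t ⊆ Icc t d

lemma IsSchedule.exists_then_march (hR : R.IsSchedule i) :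
    ∃ S : PawnRace, range (i + 1) ⊆ S.occupied 0 ∧ (∀ t, t ∈ S.moves t) ∧
      (∀ t, S.occupied t ⊆ Icc t (max t i)) ∧
      S.cost c (i + r) = R.cost c i + (c + 1) * r := by
  have h : R.occupied i ⊆ march.occupied i := by
    simpa [march] using hR.occupied_subset i le_rfl
  refine ⟨R.switch march i h, ?_, fun t ↦ ?_, fun t ↦ ?_, ?_⟩
  · obtain rfl | hi := i.eq_zero_or_pos
    · simp [switch, march]
    · simpa [switch, hi] using hR.range_subset
  · by_cases hti : t < i
    · simpa [switch, hti] using hR.mem_moves t hti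
    · simp [switch, hti, march]
  · by_cases hti : t < i
    · simpa [switch, hti, max_eq_right hti.le] using hR.occupied_subset t hti.le
    · simp [switch, hti, march]
  · simp [cost_switch, roundCost, march, mul_comm]

lemma IsSchedule.exists_then_rest (hR : R.IsSchedule j) :
    ∃ S : PawnRace, range (j + 1) ⊆ S.occupied 0 ∧ (∀ t, S.occupied t ⊆ Icc (min t j) j) ∧
      S.cost c (j + r) = R.cost c j + c * r := by
  have h : R.occupied j ⊆ (rest j).occupied j := by
    simpa [rest] using hR.occupied_subset j le_rfl
  refine ⟨R.switch (rest j) j h, ?_, fun t ↦ ?_, ?_⟩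
  · obtain rfl | hj := j.eq_zero_or_pos
    · simp [switch, rest]
    · simpa [switch, hj] using hR.range_subset
  · by_cases htj : t < j
    · simpa [switch, htj, min_eq_left htj.le] using hR.occupied_subset t htj.le
    · simp [switch, htj, rest]
  · simp [cost_switch, roundCost, rest, mul_comm]

/-- The pawns of the back group, once gathered, have to march at the pace of the deadline, while
the front group waits for them. -/
lemma IsSchedule.exists_combine (hR : R.IsSchedule i) (hR' : R'.IsSchedule j) :
    ∃ S : PawnRace, S.IsSchedule (i + j + 1) ∧
      S.cost c (i + j + 1) ≤ R.cost c i + R'.cost c j + (c + 1) * (j + 1) + c * (i + 1) := by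
  obtain ⟨B, hB₀, hB_moves, hB_occ, hB_cost⟩ := hR.exists_then_march (c := c) (r := j + 1)
  obtain ⟨F, hF₀, hF_occ, hF_cost⟩ := hR'.exists_then_rest (c := c) (r := i + 1)
  refine ⟨B.union (F.shift (i + 1)), ⟨fun p hp ↦ ?_, fun t _ ↦ ?_, fun t ht p hp ↦ ?_⟩, ?_⟩
  · rw [union, mem_union]
    rw [mem_range] at hp
    obtain hpi | hpi := lt_or_ge p (i + 1)
    · exact .inl (hB₀ (mem_range.mpr hpi))
    · obtain ⟨x, rfl⟩ := Nat.exists_eq_add_of_le' hpi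
      exact .inr (mem_map_of_mem _ (hF₀ (mem_range.mpr (by omega))))
  · exact mem_union_left _ (hB_moves t)
  · obtain hp | hp := mem_union.mp hp
    · have := mem_Icc.mp (hB_occ t hp)
      exact mem_Icc.mpr (by omega)
    · obtain ⟨x, hx, rfl⟩ := mem_map.mp hp
      have := mem_Icc.mp (hF_occ t hx)
      rw [addRightEmbedding_apply, mem_Icc]
      omega
  · have := cost_union_le (R := B) (R' := F.shift (i + 1)) (c := c) (T := i + j + 1)
    rw [cost_shift] at this
    rw [show i + (j + 1) = i + j + 1 by omega] at hB_cost
    rw [show j + (i + 1) = i + j + 1 by omega] at hF_cost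
    omega

lemma exists_isSchedule_cost_le (c d : ℕ) :
    ∃ R : PawnRace, R.IsSchedule d ∧ R.cost c d ≤ fc c (d + 1) := by
  induction d using Nat.strong_induction_on with
  | _ d ih =>
    obtain _ | k := d
    · exact ⟨rest 0, ⟨by simp [rest], by simp, by simp [rest]⟩, by simp [cost]⟩
    obtain ⟨i, j, rfl, hij⟩ := (isLeast_fc_add_two c k).1
    obtain ⟨R, hR, hR_cost⟩ := ih i (by omega)
    obtain ⟨R', hR', hR'_cost⟩ := ih j (by omega)
    obtain ⟨S, hS, hS_cost⟩ := hR.exists_combine (c := c) hR'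
    refine ⟨S, hS, hS_cost.trans ?_⟩
    rw [show i + j + 1 + 1 = i + j + 2 by omega]
    omega

end PawnRace

/-- One round `a b ^ β (k - 1) a b ^ β (k - 2) … a b ^ β 0` of `k` letters `a`. The state `q + 1`
reaches the hole just before the factor `b ^ β q` if `k` is the number of states outside. -/
def roundWord (β : ℕ → ℕ) : ℕ → List Bool
  | 0 => []
  | k + 1 => false :: (List.replicate (β k) true ++ roundWord β k)

section RoundWord

variable {m c i j k q z : ℕ} {β : ℕ → ℕ}

lemma length_roundWord (β : ℕ → ℕ) (k : ℕ) :
    (roundWord β k).length = k + ∑ q ∈ Finset.range k, β q := by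
  induction k with
  | zero => rfl
  | succ k ih =>
    rw [roundWord, List.length_cons, List.length_append, List.length_replicate, ih,
      Finset.sum_range_succ]
    omega

lemma cernyRun_replicate_b_of_le (hz : z ≤ m) :
    cernyRun c (m + c + 1) z (List.replicate j true) = some z := by
  induction j with
  | zero => rfl
  | succ j ih => rw [List.replicate_succ, cernyRun_cons, cernyStep_b_of_le hz, Option.bind_some, ih]

lemma cernyRun_replicate_b_of_add_le (h : i + j ≤ c) :
    cernyRun c (m + c + 1) (m + 1 + i) (List.replicate j true) = some (m + 1 + i + j) := by
  induction j with
  | zero => rfl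
  | succ j ih =>
    rw [List.replicate_succ', cernyRun_append, ih (by omega), Option.bind_some,
      cernyRun_singleton, cernyStep_b_of_lt_of_lt (by omega) (by omega), add_assoc]

lemma cernyRun_replicate_b_of_add_eq (h : i + j = c) :
    cernyRun c (m + c + 1) (m + 1 + i) (List.replicate (j + 1) true) = some 1 := by
  rw [List.replicate_succ', cernyRun_append, cernyRun_replicate_b_of_add_le h.le,
    Option.bind_some, cernyRun_singleton, show m + 1 + i + j = m + c + 1 by omega,
    cernyStep_b_last]

lemma exists_cernyRun_replicate_b (hm : 0 < m) (hz : 1 ≤ z) (hz' : z ≤ m + c + 1) :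
    ∃ p < m, cernyRun c (m + c + 1) z (List.replicate (c + 1) true) = some (p + 1) := by
  obtain hzm | hzm := le_or_gt z m
  · exact ⟨z - 1, by omega, by rw [cernyRun_replicate_b_of_le hzm, Nat.sub_add_cancel hz]⟩
  · obtain ⟨i, rfl⟩ := Nat.exists_eq_add_of_le (Nat.succ_le_of_lt hzm)
    obtain ⟨j, hj⟩ := Nat.exists_eq_add_of_le (show i ≤ c by omega)
    refine ⟨0, hm, ?_⟩
    rw [show c + 1 = j + 1 + i by omega, List.replicate_add, cernyRun_append,
      cernyRun_replicate_b_of_add_eq hj.symm, Option.bind_some, cernyRun_replicate_b_of_le hm]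

lemma cernyRun_roundWord_of_add_le (h : z + k ≤ m) :
    cernyRun c (m + c + 1) z (roundWord β k) = some (z + k) := by
  induction k generalizing z with
  | zero => rfl
  | succ k ih =>
    rw [roundWord, cernyRun_cons, cernyStep_a_of_le (by omega), Option.bind_some,
      cernyRun_append, cernyRun_replicate_b_of_le (by omega), Option.bind_some, ih (by omega),
      Nat.add_right_comm, add_assoc]

lemma cernyRun_roundWord_of_add_eq (hz : z + k = m + q + 1) (hq : q < k) :
    cernyRun c (m + c + 1) z (roundWord β k) =
      cernyRun c (m + c + 1) (m + 1) (List.replicate (β q) true ++ roundWord β q) := by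
  induction k generalizing z with
  | zero => omega
  | succ k ih =>
    rw [roundWord, cernyRun_cons, cernyStep_a_of_le (by omega), Option.bind_some]
    obtain hqk | rfl := Nat.lt_succ_iff_lt_or_eq.mp hq
    · rw [cernyRun_append, cernyRun_replicate_b_of_le (by omega), Option.bind_some,
        ih (by omega) hqk]
    · rw [show z = m by omega]

lemma cernyRun_roundWord_of_eq_add_one (hq : q < m) (hβ : β q = c + 1) :
    cernyRun c (m + c + 1) (q + 1) (roundWord β m) = some (q + 1) := by
  rw [cernyRun_roundWord_of_add_eq (by omega) hq, hβ, cernyRun_append,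
    cernyRun_replicate_b_of_add_eq (i := 0) (zero_add c), Option.bind_some,
    cernyRun_roundWord_of_add_le (by omega), add_comm]

lemma cernyRun_roundWord_of_eq (hq : q + 1 < m) (hβ : β (q + 1) = c) :
    cernyRun c (m + c + 1) (q + 2) (roundWord β m) = some (q + 1) := by
  rw [cernyRun_roundWord_of_add_eq (by omega) hq, hβ, cernyRun_append,
    cernyRun_replicate_b_of_add_le (i := 0) (zero_add c).le, Option.bind_some, roundWord,
    cernyRun_cons, show m + 1 + 0 + c = m + c + 1 by omega, cernyStep_a_last, Option.bind_some,
    cernyRun_append, cernyRun_replicate_b_of_le (by omega), Option.bind_some,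
    cernyRun_roundWord_of_add_le (by omega), add_comm]

end RoundWord

namespace PawnRace

open Finset

variable {R : PawnRace} {c d q t : ℕ}

/-- The number of letters `b` given in round `t` to the token of a pawn on the square `p`: with
`c + 1` of them it returns to its state by the end of the round, with only `c` of them it falls back
by one state. -/
def delay (R : PawnRace) (c t p : ℕ) : ℕ :=
  (if p ∈ R.occupied t then c else 0) + if p ∈ R.moves t then 1 else 0

/-- The word of `t` rounds which realizes the race, the state `q + 1` in round `t` standing for the
square `q + t`. -/
def word (R : PawnRace) (m c : ℕ) : ℕ → List Bool
  | 0 => []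
  | t + 1 => R.word m c t ++ roundWord (fun q ↦ R.delay c t (q + t)) m

lemma sum_delay_le (R : PawnRace) (c t m : ℕ) :
    ∑ q ∈ range m, R.delay c t (q + t) ≤ R.roundCost c t := by
  have card_le (S : Finset ℕ) : #{q ∈ range m | q + t ∈ S} ≤ #S :=
    card_le_card_of_injOn (· + t) (fun q hq ↦ (mem_filter.mp hq).2)
      (add_left_injective t).injOn
  simp only [delay, sum_add_distrib, ← sum_filter, sum_const, smul_eq_mul, mul_one, roundCost]
  rw [mul_comm c]
  exact Nat.add_le_add (Nat.mul_le_mul_right c (card_le _)) (card_le _)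

lemma length_word_le (R : PawnRace) (m c t : ℕ) :
    (R.word m c t).length ≤ m * t + R.cost c t := by
  induction t with
  | zero => simp [word]
  | succ t ih =>
    have := R.sum_delay_le c t m
    rw [word, List.length_append, length_roundWord, cost, sum_range_succ, ← cost, Nat.mul_succ]
    omega

lemma IsSchedule.exists_cernyRun_word (hR : R.IsSchedule d) (hq : q ≤ d) (ht : t ≤ d) :
    ∃ p, p + t ∈ R.occupied t ∧
      cernyRun c (d + 1 + c + 1) (q + 1) (R.word (d + 1) c t) = some (p + 1) := by
  induction t with
  | zero => exact ⟨q, hR.range_subset (mem_range.mpr (Nat.lt_succ_of_le hq)), rfl⟩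
  | succ t ih =>
    obtain ⟨p, hp, hrun⟩ := ih (by omega)
    have hpd := mem_Icc.mp (hR.occupied_subset t (by omega) hp)
    rw [word, cernyRun_append, hrun, Option.bind_some]
    by_cases hmove : p + t ∈ R.moves t
    · exact ⟨p, R.succ_mem hmove,
        cernyRun_roundWord_of_eq_add_one (by omega) (by simp [delay, hp, hmove])⟩
    · obtain _ | p := p
      · exact absurd (hR.mem_moves t ht) (by simpa using hmove)
      · refine ⟨p, ?_, cernyRun_roundWord_of_eq (by omega) (by simp [delay, hp, hmove])⟩
        rw [← add_assoc, add_right_comm]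
        exact R.mem_of_notMem hp hmove

lemma IsSchedule.isSync (hR : R.IsSchedule d) :
    IsSync c (d + 1 + c + 1) (List.replicate (c + 1) true ++ R.word (d + 1) c d) := by
  refine ⟨1, fun q hq ↦ ?_⟩
  rw [Finset.mem_Icc] at hq
  obtain ⟨p, hp, hrun⟩ := exists_cernyRun_replicate_b d.succ_pos hq.1 hq.2
  obtain ⟨p', hp', hrun'⟩ := hR.exists_cernyRun_word (c := c) (Nat.le_of_lt_succ hp) le_rfl
  have := mem_Icc.mp (hR.occupied_subset d le_rfl hp')
  obtain rfl : p' = 0 := by omega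
  rw [cernyRun_append, hrun, Option.bind_some, hrun']

end PawnRace

lemma exists_isSync_length_le (c d : ℕ) :
    ∃ w, IsSync c (d + 1 + c + 1) w ∧ w.length ≤ (d + 1) * d + c + 1 + fc c (d + 1) := by
  obtain ⟨R, hR, hcost⟩ := PawnRace.exists_isSchedule_cost_le c d
  have hlength := R.length_word_le (d + 1) c d
  refine ⟨_, hR.isSync, ?_⟩
  rw [List.length_append, List.length_replicate]
  omega

/-- **Theorem (reduction to the pawn race problem).**
For every `c : ℕ` and every `n ≥ c+2`, writing `n' = n - c - 1`, the reset threshold of the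
PFA `C_n^c` equals `n'·(n'-1) + c + 1 + f_c(n')`. -/
theorem resetThreshold_eq_pawnRace (c n : ℕ) (hn : c + 2 ≤ n) :
    resetThreshold c n =
      (n - c - 1) * (n - c - 1 - 1) + c + 1 + fc c (n - c - 1) := by
  obtain ⟨d, rfl⟩ : ∃ d, n = d + 1 + c + 1 := ⟨n - c - 2, by omega⟩
  rw [show d + 1 + c + 1 - c - 1 = d + 1 by omega, Nat.add_sub_cancel]
  obtain ⟨w, hw, hlength⟩ := exists_isSync_length_le c d
  refine IsLeast.csInf_eq ⟨⟨w, hlength.antisymm hw.le_length, hw⟩, ?_⟩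
  rintro _ ⟨v, rfl, hv⟩
  exact hv.le_length
end

section
/- For all natural numbers c ≥ 0 and all integers n ≥ 1, c·n·log₂(n) ≤ f_c(n) ≤ (c + 1/2)·n·⌈log₂(n)⌉. -/
/-!
A split `n = i + j` costs `(c + 1) * n - i = c * n + j`, which is at least `c * n`, and at most
`(c + 1/2) * n` when `j = ⌊n/2⌋`. The lower bound then follows by induction because convexity of
`x * log₂ x` makes `c * n` cover the growth of `c * n * log₂ n` under any split. For the upper
bound, halving reaches size `1` after `⌈log₂ n⌉` rounds, and the costs of each round sum to at
most `(c + 1/2) * n`.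
-/

theorem convexOn_mul_logb {b : ℝ} (hb : 1 ≤ b) :
    ConvexOn ℝ (Set.Ici 0) fun x ↦ x * Real.logb b x := by
  have hscaled := Real.convexOn_mul_log.smul (inv_nonneg.mpr (Real.log_nonneg hb))
  refine hscaled.congr fun x _ ↦ ?_
  simp only [smul_eq_mul, Real.logb, div_eq_mul_inv]
  ring

theorem add_mul_logb_two_add_le {x y : ℝ} (hx : 0 ≤ x) (hy : 0 ≤ y) :
    (x + y) * Real.logb 2 (x + y) ≤ x * Real.logb 2 x + y * Real.logb 2 y + (x + y) := by
  rcases (add_nonneg hx hy).eq_or_lt with hsum | hsum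
  · obtain ⟨rfl, rfl⟩ := (add_eq_zero_iff_of_nonneg hx hy).mp hsum.symm
    simp
  have hlog : Real.logb 2 ((x + y) / 2) = Real.logb 2 (x + y) - 1 := by
    rw [Real.logb_div hsum.ne' two_ne_zero, Real.logb_self_eq_one one_lt_two]
  have hmid : 1 / 2 * x + 1 / 2 * y = (x + y) / 2 := by ring
  have hconv := (convexOn_mul_logb one_le_two).2 (Set.mem_Ici.mpr hx) (Set.mem_Ici.mpr hy)
    one_half_pos.le one_half_pos.le (add_halves 1)
  simp only [smul_eq_mul, hmid, hlog] at hconv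
  linarith

theorem mul_mul_logb_two_le_of_exists_split {f : ℕ → ℝ} {a : ℝ} (ha : 0 ≤ a) (hf_one : 0 ≤ f 1)
    (hf : ∀ n, 2 ≤ n → ∃ i j, 0 < i ∧ 0 < j ∧ i + j = n ∧ f i + f j + a * n ≤ f n)
    {n : ℕ} (hn : 1 ≤ n) : a * n * Real.logb 2 n ≤ f n := by
  induction n using Nat.strong_induction_on with
  | _ n ih =>
    obtain rfl | hn_two := hn.eq_or_lt
    · simpa using hf_one
    obtain ⟨i, j, hi, hj, rfl, hsplit⟩ := hf n hn_two
    have hlog := mul_le_mul_of_nonneg_left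
      (add_mul_logb_two_add_le i.cast_nonneg j.cast_nonneg) ha
    push_cast at hsplit ⊢
    calc a * (i + j) * Real.logb 2 (i + j)
        ≤ a * i * Real.logb 2 i + a * j * Real.logb 2 j + a * (i + j) := by linarith
      _ ≤ f i + f j + a * (i + j) := by
          gcongr
          · exact ih i (by lia) hi
          · exact ih j (by lia) hj
      _ ≤ f (i + j) := hsplit

theorem le_mul_mul_clog_two_of_le_halves {R : Type*} [Semiring R] [PartialOrder R]
    [IsOrderedRing R] {f : ℕ → R} {b : R} (hb : 0 ≤ b) (hf_one : f 1 ≤ 0)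
    (hf : ∀ n, 2 ≤ n → f n ≤ f ((n + 1) / 2) + f (n / 2) + b * n)
    {n : ℕ} (hn : 1 ≤ n) : f n ≤ b * n * Nat.clog 2 n := by
  induction n using Nat.strong_induction_on with
  | _ n ih =>
    obtain rfl | hn_two := hn.eq_or_lt
    · simpa using hf_one
    set i := (n + 1) / 2
    set j := n / 2
    have hsum : i + j = n := by lia
    have hclog : Nat.clog 2 n = Nat.clog 2 i + 1 := Nat.clog_of_two_le one_lt_two hn_two
    have hclog_le : Nat.clog 2 j ≤ Nat.clog 2 i := Nat.clog_mono_right 2 (by lia)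
    calc f n ≤ f i + f j + b * n := hf n hn_two
      _ ≤ b * i * Nat.clog 2 i + b * j * Nat.clog 2 j + b * n := by
          gcongr
          · exact ih i (by lia) (by lia)
          · exact ih j (by lia) (by lia)
      _ ≤ b * i * Nat.clog 2 i + b * j * Nat.clog 2 i + b * n := by gcongr
      _ = b * n * Nat.clog 2 n := by
          rw [← add_mul, ← mul_add, ← Nat.cast_add, hsum, hclog, Nat.cast_add_one, mul_add_one]

theorem fc_add_le (c : ℕ) {i j : ℕ} (hi : 0 < i) (hj : 0 < j) :
    fc c (i + j) ≤ fc c i + fc c j + c * (i + j) + j := by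
  obtain ⟨m, hm⟩ : ∃ m, i + j = m + 2 := ⟨i + j - 2, by lia⟩
  have hmem : i ∈ Finset.Icc 1 (m + 1) := Finset.mem_Icc.mpr ⟨hi, by lia⟩
  rw [hm, fc]
  refine (Finset.inf'_le _ (Finset.mem_attach _ ⟨i, hmem⟩)).trans ?_
  rw [← hm, Nat.add_sub_cancel_left, add_one_mul]
  lia

theorem exists_fc_eq_add (c : ℕ) {n : ℕ} (hn : 2 ≤ n) :
    ∃ i j, 0 < i ∧ 0 < j ∧ i + j = n ∧ fc c n = fc c i + fc c j + c * n + j := by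
  obtain ⟨m, rfl⟩ := Nat.exists_eq_add_of_le' hn
  obtain ⟨⟨i, hmem⟩, -, hmin⟩ := Finset.exists_mem_eq_inf'
    (Finset.attach_nonempty_iff.mpr ⟨1, by simp⟩)
    fun i : Finset.Icc 1 (m + 1) ↦
      fc c i.1 + fc c (m + 2 - i.1) + (c + 1) * (m + 2) - i.1
  obtain ⟨hi, him⟩ := Finset.mem_Icc.mp hmem
  refine ⟨i, m + 2 - i, hi, by lia, by lia, ?_⟩
  rw [fc, hmin, add_one_mul]
  lia

theorem mul_mul_logb_two_le_fc (c : ℕ) {n : ℕ} (hn : 1 ≤ n) :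
    (c : ℝ) * n * Real.logb 2 n ≤ fc c n := by
  refine mul_mul_logb_two_le_of_exists_split (f := fun k ↦ (fc c k : ℝ)) c.cast_nonneg
    (Nat.cast_nonneg _) (fun k hk ↦ ?_) hn
  obtain ⟨i, j, hi, hj, hsum, hsplit⟩ := exists_fc_eq_add c hk
  have hle : fc c i + fc c j + c * k ≤ fc c k := hsplit ▸ Nat.le_add_right _ j
  exact ⟨i, j, hi, hj, hsum, mod_cast hle⟩

theorem fc_le_halves (c : ℕ) {n : ℕ} (hn : 2 ≤ n) :
    (fc c n : ℝ) ≤ fc c ((n + 1) / 2) + fc c (n / 2) + (c + 1 / 2) * n := by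
  have hsum : (n + 1) / 2 + n / 2 = n := by lia
  have hsplit : fc c n ≤ fc c ((n + 1) / 2) + fc c (n / 2) + c * n + n / 2 := by
    simpa only [hsum] using
      fc_add_le c (i := (n + 1) / 2) (j := n / 2) (by lia) (by lia)
  have hhalf : ((n / 2 : ℕ) : ℝ) ≤ n / 2 := Nat.cast_div_le
  calc (fc c n : ℝ)
      ≤ fc c ((n + 1) / 2) + fc c (n / 2) + c * n + (n / 2 : ℕ) := mod_cast hsplit
    _ ≤ fc c ((n + 1) / 2) + fc c (n / 2) + (c + 1 / 2) * n := by linarith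

theorem fc_le_mul_mul_clog_two (c : ℕ) {n : ℕ} (hn : 1 ≤ n) :
    (fc c n : ℝ) ≤ (c + 1 / 2) * n * Nat.clog 2 n :=
  le_mul_mul_clog_two_of_le_halves (f := fun k ↦ (fc c k : ℝ)) (by positivity)
    (by simp only [fc, Nat.cast_zero, le_refl]) (fun _ ↦ fc_le_halves c) hn

theorem ceil_logb_natCast_eq_clog (b n : ℕ) : ⌈Real.logb b n⌉ = (Nat.clog b n : ℤ) := by
  rw [Real.ceil_logb_natCast n.cast_nonneg, Int.clog_natCast]

/-- **Proposition.** For all `c ≥ 0` and all `n ≥ 1`,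
`c·n·log₂(n) ≤ f_c(n) ≤ (c + 1/2)·n·⌈log₂(n)⌉`. -/
theorem fc_log_bounds (c n : ℕ) (hn : 1 ≤ n) :
    (c : ℝ) * (n : ℝ) * Real.logb 2 (n : ℝ) ≤ (fc c n : ℝ) ∧
    (fc c n : ℝ) ≤ ((c : ℝ) + 1 / 2) * (n : ℝ) * ((⌈Real.logb 2 (n : ℝ)⌉ : ℤ) : ℝ) := by
  have hceil : ⌈Real.logb 2 (n : ℝ)⌉ = (Nat.clog 2 n : ℤ) := mod_cast ceil_logb_natCast_eq_clog 2 n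
  refine ⟨mul_mul_logb_two_le_fc c hn, ?_⟩
  rw [hceil, Int.cast_natCast]
  exact fc_le_mul_mul_clog_two c hn
end

section
/- For every integer n ≥ 6, the reset threshold of C_n^1 is strictly greater than the reset threshold of C_n^0, i.e. r(C_n^1) > r(C_n^0). -/
/-!
Write `n = m + 1`. In `C_n^1` only `b` is defined everywhere, and it maps the set of all states
onto `{1, …, m - 1, n}`, a copy of the cycle `1, …, m` on which `b` merges `m` into `1`. On this
cycle `a` rotates, except that a token leaving `m - 1` stops at the state outside the copy and
needs a further `b` to go on. So `C_n^1` is the Černý automaton `C_m^0` in which rotating a set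
`S` of tokens costs `2` instead of `1` if `m - 1 ∈ S`.

To merge all tokens, they have to be squeezed into ever shorter arcs. An arc shrinks only by a
`b` at a moment when it starts at `m`; then it starts at `1` and has to be rotated `m - 1` times,
with every token passing `m - 1`, before it can shrink again. Each `b` removes at most one token,
so getting rid of tokens early in order to make the rotations cheaper costs letters as well. In
total at least `n² - 10` letters are needed, whereas `(n - 1)²` letters suffice for `C_n^0`.
-/

namespace Cerny

open Finset

section Words

variable {c n : ℕ}

lemma cernyRun_cons (c n q : ℕ) (l : Bool) (w : List Bool) :
    cernyRun c n q (l :: w) = (cernyStep c n q l).bind fun p => cernyRun c n p w := rfl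

lemma cernyRun_append (c n q : ℕ) (u w : List Bool) :
    cernyRun c n q (u ++ w) = (cernyRun c n q u).bind fun p => cernyRun c n p w := by
  simp only [cernyRun, List.foldlM_append, Option.bind_eq_bind]

lemma cernyRun_singleton (c n q : ℕ) (l : Bool) : cernyRun c n q [l] = cernyStep c n q l :=
  Option.bind_fun_some _

lemma cernyStep_false_inj {p q r : ℕ} (hp : 1 ≤ p) (hq : 1 ≤ q)
    (hpr : cernyStep c n p false = some r) (hqr : cernyStep c n q false = some r) : p = q := by
  grind [cernyStep]

/-- The word `w` takes all states in `S` to one common state. `IsSync c n` is the case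
`S = {1, …, n}`. -/
def SyncsOn (c n : ℕ) (S : Finset ℕ) (w : List Bool) : Prop :=
  ∃ qs, ∀ q ∈ S, cernyRun c n q w = some qs

lemma SyncsOn.image_of_append {S : Finset ℕ} {f g : ℕ → ℕ} {u w : List Bool}
    (h : SyncsOn c n (S.image f) (u ++ w))
    (hu : ∀ i ∈ S, cernyRun c n (f i) u = some (g i)) : SyncsOn c n (S.image g) w := by
  obtain ⟨qs, hqs⟩ := h
  refine ⟨qs, forall_mem_image.2 fun i hi => ?_⟩
  rw [← hqs _ (mem_image_of_mem f hi), cernyRun_append, hu i hi, Option.bind_some]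

lemma card_le_one_of_syncsOn_nil {S : Finset ℕ} (h : SyncsOn c n S []) : #S ≤ 1 := by
  obtain ⟨qs, hqs⟩ := h
  exact card_le_one.2 fun p hp q hq => Option.some.inj ((hqs p hp).trans (hqs q hq).symm)

lemma card_le_one_of_syncsOn_false {S : Finset ℕ} (hS : ∀ q ∈ S, 1 ≤ q)
    (h : SyncsOn c n S [false]) : #S ≤ 1 := by
  obtain ⟨qs, hqs⟩ := h
  simp only [cernyRun_singleton] at hqs
  exact card_le_one.2 fun p hp q hq =>
    cernyStep_false_inj (hS p hp) (hS q hq) (hqs p hp) (hqs q hq)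

end Words

section Simulation

variable {m i : ℕ} {S : Finset ℕ}

/-- The letter `a` of the Černý automaton on the cycle `1, …, m`. -/
def rotate (m i : ℕ) : ℕ := if i = m then 1 else i + 1

/-- The letter `b` of the Černý automaton on the cycle `1, …, m`. -/
def merge (m i : ℕ) : ℕ := if i = m then 1 else i

/-- The copy of the cycle `1, …, m` inside `C_{m+1}^1`, which leaves out the state `m`. -/
def embed (m i : ℕ) : ℕ := if i = m then m + 1 else i

lemma rotate_mem_Icc (hi : i ∈ Icc 1 m) : rotate m i ∈ Icc 1 m := by
  grind [rotate]

lemma merge_mem_Icc (hi : i ∈ Icc 1 m) : merge m i ∈ Icc 1 m := by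
  grind [merge]

lemma rotate_injOn (m : ℕ) : Set.InjOn (rotate m) (Icc 1 m) := by
  intro i hi j hj hij
  grind [rotate]

lemma embed_injOn (m : ℕ) : Set.InjOn (embed m) (Icc 1 m) := by
  intro i hi j hj hij
  grind [embed]

lemma one_le_embed (hi : i ∈ Icc 1 m) : 1 ≤ embed m i := by
  grind [embed]

lemma image_rotate_subset (hS : S ⊆ Icc 1 m) : S.image (rotate m) ⊆ Icc 1 m :=
  image_subset_iff.2 fun _ hi => rotate_mem_Icc (hS hi)

lemma image_merge_subset (hS : S ⊆ Icc 1 m) : S.image (merge m) ⊆ Icc 1 m :=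
  image_subset_iff.2 fun _ hi => merge_mem_Icc (hS hi)

lemma card_image_rotate (hS : S ⊆ Icc 1 m) : #(S.image (rotate m)) = #S :=
  card_image_of_injOn ((rotate_injOn m).mono (coe_subset.2 hS))

lemma exists_rotate_eq {p : ℕ} (hp : p ∈ Icc 1 m) : ∃ q ∈ Icc 1 m, rotate m q = p := by
  by_cases h : p = 1
  · exact ⟨m, by grind, by grind [rotate]⟩
  · exact ⟨p - 1, by grind, by grind [rotate]⟩

lemma card_le_card_image_merge_add_one (m : ℕ) (S : Finset ℕ) :
    #S ≤ #(S.image (merge m)) + 1 := by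
  have hS : S ⊆ insert m (S.image (merge m)) := by
    intro i hi
    grind [merge]
  exact (card_le_card hS).trans (card_insert_le _ _)

lemma notMem_image_merge (hm : m ≠ 1) : m ∉ S.image (merge m) := by
  grind [merge]

lemma image_merge_subset_Ico (hm : 2 ≤ m) (hS : S ⊆ Icc 1 m) :
    S.image (merge m) ⊆ Ico 1 m := by
  intro i hi
  grind [merge]

lemma inter_Ico_subset_image_merge (m p : ℕ) (S : Finset ℕ) :
    S ∩ Ico p m ⊆ S.image (merge m) ∩ Ico p m := by
  intro i hi
  grind [merge]

lemma image_merge_of_notMem (h : m ∉ S) : S.image (merge m) = S := by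
  ext x
  grind [merge]

lemma cernyStep_zero_false (hi : i ∈ Icc 1 m) : cernyStep 0 m i false = some (rotate m i) := by
  grind [cernyStep, rotate]

lemma cernyStep_zero_true (hi : i ∈ Icc 1 m) : cernyStep 0 m i true = some (merge m i) := by
  grind [cernyStep, merge]

lemma cernyStep_one_true (hm : 2 ≤ m) (hi : i ∈ Icc 1 (m + 1)) :
    cernyStep 1 (m + 1) i true = some (embed m (merge (m + 1) i)) := by
  grind [cernyStep, embed, merge]

lemma cernyStep_one_extra_false (hm : 1 ≤ m) : cernyStep 1 (m + 1) m false = none := by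
  grind [cernyStep]

lemma cernyStep_one_embed_true (hm : 2 ≤ m) (hi : i ∈ Icc 1 m) :
    cernyStep 1 (m + 1) (embed m i) true = some (embed m (merge m i)) := by
  grind [cernyStep, embed, merge]

lemma cernyStep_one_embed_false (hm : 2 ≤ m) (hi : i ∈ Icc 1 m) (hne : i ≠ m - 1) :
    cernyStep 1 (m + 1) (embed m i) false = some (embed m (rotate m i)) := by
  grind [cernyStep, embed, rotate]

lemma cernyStep_one_embed_pred_false (hm : 1 ≤ m) :
    cernyStep 1 (m + 1) (embed m (m - 1)) false = some m := by
  grind [cernyStep, embed]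

lemma cernyRun_one_embed_false_true (hi : i ∈ Icc 1 m) :
    cernyRun 1 (m + 1) (embed m i) [false, true] = some (embed m (rotate m i)) := by
  rw [cernyRun_cons]
  simp only [cernyRun_singleton]
  grind [cernyStep, embed, rotate]

lemma SyncsOn.image_merge {w : List Bool} (hm : 2 ≤ m) (hS : S ⊆ Icc 1 m)
    (h : SyncsOn 1 (m + 1) (S.image (embed m)) (true :: w)) :
    SyncsOn 1 (m + 1) ((S.image (merge m)).image (embed m)) w := by
  rw [image_image]
  exact h.image_of_append (u := [true]) fun i hi =>
    (cernyRun_singleton ..).trans (cernyStep_one_embed_true hm (hS hi))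

lemma SyncsOn.image_rotate_of_notMem {w : List Bool} (hm : 2 ≤ m) (hS : S ⊆ Icc 1 m)
    (hpred : m - 1 ∉ S) (h : SyncsOn 1 (m + 1) (S.image (embed m)) (false :: w)) :
    SyncsOn 1 (m + 1) ((S.image (rotate m)).image (embed m)) w := by
  rw [image_image]
  exact h.image_of_append (u := [false]) fun i hi => (cernyRun_singleton ..).trans
    (cernyStep_one_embed_false hm (hS hi) fun hi' => hpred (hi' ▸ hi))

lemma SyncsOn.image_rotate {w : List Bool} (hS : S ⊆ Icc 1 m)
    (h : SyncsOn 1 (m + 1) (S.image (embed m)) (false :: true :: w)) :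
    SyncsOn 1 (m + 1) ((S.image (rotate m)).image (embed m)) w := by
  rw [image_image]
  exact h.image_of_append (u := [false, true]) fun i hi => cernyRun_one_embed_false_true (hS hi)

lemma not_syncsOn_false_false (hm : 1 ≤ m) (h : m - 1 ∈ S) (w : List Bool) :
    ¬ SyncsOn 1 (m + 1) (S.image (embed m)) (false :: false :: w) := by
  rintro ⟨qs, hqs⟩
  have hrun := hqs _ (mem_image_of_mem _ h)
  rw [cernyRun_cons, cernyStep_one_embed_pred_false hm, Option.bind_some, cernyRun_cons,
    cernyStep_one_extra_false hm, Option.bind_none] at hrun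
  cases hrun

end Simulation

section Cost

variable {m : ℕ}

/-- The set `S` of states of the Černý automaton on `1, …, m` can be merged into at most one state
within the budget `k`, where `b` costs `1` and `a` costs `1`, or `2` if it moves a token off
`m - 1`. -/
inductive MergesWithin (m : ℕ) : Finset ℕ → ℕ → Prop
  | of_card_le_one {S : Finset ℕ} {k : ℕ} : #S ≤ 1 → MergesWithin m S k
  | rotate {S : Finset ℕ} {k : ℕ} : MergesWithin m (S.image (rotate m)) k →
      MergesWithin m S (k + 1 + if m - 1 ∈ S then 1 else 0)
  | merge {S : Finset ℕ} {k : ℕ} : MergesWithin m (S.image (merge m)) k →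
      MergesWithin m S (k + 1)

theorem mergesWithin_of_syncsOn {S : Finset ℕ} (hm : 2 ≤ m) (w : List Bool)
    (hS : S ⊆ Icc 1 m) (h : SyncsOn 1 (m + 1) (S.image (embed m)) w) :
    MergesWithin m S w.length := by
  have hcard : #(S.image (embed m)) = #S :=
    card_image_of_injOn ((embed_injOn m).mono (coe_subset.2 hS))
  match w, h with
  | [], h => exact .of_card_le_one (hcard ▸ card_le_one_of_syncsOn_nil h)
  | true :: w, h =>
    exact .merge (mergesWithin_of_syncsOn hm w (image_merge_subset hS) (h.image_merge hm hS))
  | false :: w, h =>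
    by_cases hpred : m - 1 ∈ S
    · match w, h with
      | [], h =>
        have hpos : ∀ q ∈ S.image (embed m), 1 ≤ q :=
          forall_mem_image.2 fun i hi => one_le_embed (hS hi)
        exact .of_card_le_one (hcard ▸ card_le_one_of_syncsOn_false hpos h)
      | false :: w, h => exact (not_syncsOn_false_false (by omega) hpred w h).elim
      | true :: w, h =>
        have hrest := mergesWithin_of_syncsOn hm w (image_rotate_subset hS) (h.image_rotate hS)
        simpa only [if_pos hpred, List.length_cons] using hrest.rotate
    · have hrest := mergesWithin_of_syncsOn hm w (image_rotate_subset hS)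
        (h.image_rotate_of_notMem hm hS hpred)
      simpa only [if_neg hpred, List.length_cons, add_zero] using hrest.rotate

end Cost

section LowerBound

variable {m k C p q ℓ : ℕ} {S : Finset ℕ}

/-- The arc of `ℓ` consecutive states of the cycle `1, …, m` starting at `p`. -/
def arc (m p ℓ : ℕ) : Finset ℕ := {i ∈ Icc 1 m | p ≤ i ∧ i < p + ℓ ∨ i + m < p + ℓ}

lemma mem_arc {i : ℕ} :
    i ∈ arc m p ℓ ↔ i ∈ Icc 1 m ∧ (p ≤ i ∧ i < p + ℓ ∨ i + m < p + ℓ) := mem_filter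

lemma not_Icc_subset_arc (hp : p ∈ Icc 1 m) (hℓ : ℓ < m) : ¬ Icc 1 m ⊆ arc m p ℓ := by
  intro h
  obtain ⟨q, hq, rfl⟩ := exists_rotate_eq hp
  have := mem_arc.1 (h hq)
  grind [rotate]

lemma two_le_of_subset_Icc (hS : S ⊆ Icc 1 m) (hcard : 2 ≤ #S) : 2 ≤ m := by
  simpa only [Nat.card_Icc, Nat.add_sub_cancel] using hcard.trans (card_le_card hS)

lemma subset_arc_of_image_rotate (hS : S ⊆ Icc 1 m) (hq : q ∈ Icc 1 m)
    (h : S.image (rotate m) ⊆ arc m (rotate m q) ℓ) : S ⊆ arc m q ℓ := by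
  intro i hi
  have := mem_arc.1 (h (mem_image_of_mem _ hi))
  have := hS hi
  grind [mem_arc, rotate]

lemma subset_arc_of_image_merge (hS : S ⊆ Icc 1 m) (hp : 1 < p) (hpm : p ≤ m)
    (h : S.image (merge m) ⊆ arc m p ℓ) : S ⊆ arc m p ℓ := by
  intro i hi
  have := mem_arc.1 (h (mem_image_of_mem _ hi))
  have := hS hi
  grind [mem_arc, merge]

lemma subset_arc_succ_of_image_merge (hS : S ⊆ Icc 1 m)
    (h : S.image (merge m) ⊆ arc m 1 ℓ) : S ⊆ arc m m (ℓ + 1) := by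
  intro i hi
  have := mem_arc.1 (h (mem_image_of_mem _ hi))
  have := hS hi
  grind [mem_arc, merge]

lemma card_inter_Ico_le_succ (m p : ℕ) (S : Finset ℕ) :
    #(S ∩ Ico p m) ≤ #(S.image (rotate m) ∩ Ico (p + 1) m) + if m - 1 ∈ S then 1 else 0 := by
  have hinj : Set.InjOn (rotate m) ↑(S ∩ Ico p (m - 1)) := by
    intro i hi j hj hij
    grind [rotate]
  have hmoved : (S ∩ Ico p (m - 1)).image (rotate m) ⊆ S.image (rotate m) ∩ Ico (p + 1) m := by
    intro x hx
    grind [rotate]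
  have hsplit : S ∩ Ico p m ⊆ (S ∩ Ico p (m - 1)) ∪ (S ∩ {m - 1}) := by
    intro x hx
    grind
  have hpred : #(S ∩ {m - 1}) = if m - 1 ∈ S then 1 else 0 := by
    rw [inter_singleton, apply_ite card, card_singleton, card_empty]
  calc #(S ∩ Ico p m) ≤ #(S ∩ Ico p (m - 1)) + #(S ∩ {m - 1}) :=
        (card_le_card hsplit).trans (card_union_le _ _)
    _ ≤ #(S.image (rotate m) ∩ Ico (p + 1) m) + if m - 1 ∈ S then 1 else 0 :=
        add_le_add ((card_image_of_injOn hinj).symm.trans_le (card_le_card hmoved)) hpred.le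

lemma rotate_add_card_inter_Ico_le (m q : ℕ) (S : Finset ℕ) :
    rotate m q + #(S ∩ Ico q m) ≤
      q + 1 + #(S.image (rotate m) ∩ Ico (rotate m q) m) + if m - 1 ∈ S then 1 else 0 := by
  by_cases hqm : q = m
  · subst hqm
    simp only [rotate, if_true, Ico_self, inter_empty, card_empty]
    omega
  · have := card_inter_Ico_le_succ m q S
    rw [rotate, if_neg hqm]
    omega

/-- Lower bounds on the cost `C` of getting from all of `1, …, m` to the set `S`.

`card_bound`: two merging letters `b` are separated by a rotation.
`arc_bound`: a set in a proper arc of length `ℓ` starting at `p` needs `m - p` more rotations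
until the arc can shrink, `#(S ∩ Ico p m)` of them at double cost, and a whole round costs `m + 2`
when two tokens are left; `max #S 3` accounts for the `b`s that merge superfluous tokens. The
constants make this sharp for `S = {1, …, m - 1}` and `C = 1` when `4 ≤ m`. -/
structure CostBound (m : ℕ) (S : Finset ℕ) (C : ℕ) : Prop where
  subset : S ⊆ Icc 1 m
  card_bound : 2 * m ≤ C + 2 * #S + if m ∈ S then 0 else 1
  arc_bound : ∀ p ∈ Icc 1 m, ∀ ℓ < m, S ⊆ arc m p ℓ →
    m ^ 2 + 3 * m + p ≤ C + max #S 3 + #(S ∩ Ico p m) + ℓ * (m + 2) + 4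

lemma CostBound.full (m : ℕ) : CostBound m (Icc 1 m) 0 where
  subset := Subset.rfl
  card_bound := by simp
  arc_bound p hp ℓ hℓ h := (not_Icc_subset_arc hp hℓ h).elim

lemma CostBound.image_rotate (h : CostBound m S C) :
    CostBound m (S.image (rotate m)) (C + 1 + if m - 1 ∈ S then 1 else 0) where
  subset := image_rotate_subset h.subset
  card_bound := by
    have := h.card_bound
    rw [card_image_rotate h.subset]
    grind
  arc_bound p hp ℓ hℓ harc := by
    obtain ⟨q, hq, rfl⟩ := exists_rotate_eq hp
    have hbound := h.arc_bound q hq ℓ hℓ (subset_arc_of_image_rotate h.subset hq harc)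
    have hstep := rotate_add_card_inter_Ico_le m q S
    rw [card_image_rotate h.subset]
    omega

lemma CostBound.card_bound_merge (h : CostBound m S C) :
    2 * m ≤ C + 2 * #(S.image (merge m)) + 2 := by
  have hbound := h.card_bound
  by_cases hmS : m ∈ S
  · have hS := card_le_card_image_merge_add_one m S
    rw [if_pos hmS] at hbound
    omega
  · rw [if_neg hmS] at hbound
    rw [image_merge_of_notMem hmS]
    omega

lemma CostBound.arc_bound_merge_one (h : CostBound m S C)
    (hcard : 2 ≤ #(S.image (merge m))) (hℓ : ℓ < m) (harc : S.image (merge m) ⊆ arc m 1 ℓ) :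
    m ^ 2 + 3 * m + 1 ≤
      C + 1 + max #(S.image (merge m)) 3 + #(S.image (merge m)) + ℓ * (m + 2) + 4 := by
  have hS := card_le_card_image_merge_add_one m S
  by_cases hlt : ℓ + 1 < m
  · have hbound := h.arc_bound m (by grind) (ℓ + 1) hlt
      (subset_arc_succ_of_image_merge h.subset harc)
    rw [Ico_self, inter_empty, card_empty, add_one_mul] at hbound
    omega
  · obtain rfl : m = ℓ + 1 := by omega
    have hbound := h.card_bound_merge
    have hproduct : (ℓ + 1) ^ 2 + ℓ = ℓ * (ℓ + 1 + 2) + 1 := by ring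
    omega

lemma CostBound.image_merge (h : CostBound m S C) (hcard : 2 ≤ #(S.image (merge m))) :
    CostBound m (S.image (merge m)) (C + 1) where
  subset := image_merge_subset h.subset
  card_bound := by
    have hm : 2 ≤ m := two_le_of_subset_Icc (image_merge_subset h.subset) hcard
    have hbound := h.card_bound_merge
    rw [if_neg (notMem_image_merge (by omega))]
    omega
  arc_bound p hp ℓ hℓ harc := by
    obtain ⟨hp1, hpm⟩ := mem_Icc.1 hp
    rcases hp1.eq_or_lt with rfl | hp1
    · have hm : 2 ≤ m := two_le_of_subset_Icc (image_merge_subset h.subset) hcard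
      rw [inter_eq_left.2 (image_merge_subset_Ico hm h.subset)]
      exact h.arc_bound_merge_one hcard hℓ harc
    · have hbound := h.arc_bound p hp ℓ hℓ (subset_arc_of_image_merge h.subset hp1 hpm harc)
      have hS := card_le_card_image_merge_add_one m S
      have hpass := card_le_card (inter_Ico_subset_image_merge m p S)
      omega

lemma subset_arc_two_of_card_image_merge_le_one (hS : S ⊆ Icc 1 m) (hcard : 2 ≤ #S)
    (hmerge : #(S.image (merge m)) ≤ 1) : S ⊆ arc m m 2 := by
  have hmS : m ∈ S := by
    by_contra hmS
    rw [image_merge_of_notMem hmS] at hmerge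
    omega
  intro i hi
  have hi1 : merge m i = merge m m :=
    card_le_one.1 hmerge _ (mem_image_of_mem _ hi) _ (mem_image_of_mem _ hmS)
  have := hS hi
  grind [merge, mem_arc]

lemma CostBound.le_of_card_image_merge_le_one (h : CostBound m S C) (hm : 3 ≤ m)
    (hcard : 2 ≤ #S) (hmerge : #(S.image (merge m)) ≤ 1) : m ^ 2 + 2 * m ≤ C + 1 + 10 := by
  have hS := card_le_card_image_merge_add_one m S
  have hbound := h.arc_bound m (by grind) 2 hm
    (subset_arc_two_of_card_image_merge_le_one h.subset hcard hmerge)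
  rw [Ico_self, inter_empty, card_empty] at hbound
  omega

theorem CostBound.le_of_mergesWithin (hm : 3 ≤ m) (hk : MergesWithin m S k) :
    ∀ {C}, CostBound m S C → 2 ≤ #S → m ^ 2 + 2 * m ≤ C + k + 10 := by
  induction hk with
  | of_card_le_one hle => intro C _ hcard; omega
  | rotate _ ih =>
    intro C h hcard
    have := ih h.image_rotate (by rwa [card_image_rotate h.subset])
    omega
  | @merge S k _ ih =>
    intro C h hcard
    by_cases hmerge : 2 ≤ #(S.image (merge m))
    · have := ih (h.image_merge hmerge) hmerge
      omega
    · have := h.le_of_card_image_merge_le_one hm hcard (by omega)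
      omega

lemma exists_cons_true_of_isSync_one (hm : 2 ≤ m) {w : List Bool} (h : IsSync 1 (m + 1) w) :
    ∃ v, w = true :: v ∧ SyncsOn 1 (m + 1) ((Icc 1 m).image (embed m)) v := by
  have h : SyncsOn 1 (m + 1) (Icc 1 (m + 1)) w := h
  match w, h with
  | [], h =>
    have := card_le_one_of_syncsOn_nil h
    rw [Nat.card_Icc] at this
    omega
  | false :: v, ⟨qs, hqs⟩ =>
    have hrun := hqs m (by simp; omega)
    rw [cernyRun_cons, cernyStep_one_extra_false (by omega), Option.bind_none] at hrun
    cases hrun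
  | true :: v, ⟨qs, hqs⟩ =>
    refine ⟨v, rfl, qs, forall_mem_image.2 fun i hi => ?_⟩
    have hi' : i ∈ Icc 1 (m + 1) := by grind
    have hmerge : merge (m + 1) i = i := by grind [merge]
    rw [← hqs i hi', cernyRun_cons, cernyStep_one_true hm hi', hmerge, Option.bind_some]

theorem sq_le_length_of_isSync_one (hm : 3 ≤ m) {w : List Bool} (h : IsSync 1 (m + 1) w) :
    (m + 1) ^ 2 ≤ w.length + 10 := by
  obtain ⟨v, rfl, hv⟩ := exists_cons_true_of_isSync_one (by omega) h
  have hmerges := mergesWithin_of_syncsOn (by omega) v Subset.rfl hv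
  have hcost := CostBound.le_of_mergesWithin hm hmerges (.full m) (by rw [Nat.card_Icc]; omega)
  rw [List.length_cons, add_sq]
  omega

end LowerBound

section ResetWords

variable {m q : ℕ}

/-- The reset word `b (a^{m-1} b)^{m-2}` of the Černý automaton `C_m^0`. -/
def resetWord (m : ℕ) : List Bool :=
  true :: (List.replicate (m - 2) (List.replicate (m - 1) false ++ [true])).flatten

lemma length_resetWord (hm : 2 ≤ m) : (resetWord m).length = (m - 1) ^ 2 := by
  obtain ⟨k, rfl⟩ := Nat.exists_eq_add_of_le' hm
  simp only [resetWord, List.length_cons, List.length_flatten, List.map_replicate,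
    List.length_append, List.length_replicate, List.length_nil, List.sum_replicate, smul_eq_mul,
    Nat.add_sub_cancel, Nat.add_succ_sub_one]
  ring

lemma cernyRun_zero_replicate_false {k : ℕ} (h : q + k ≤ m) :
    cernyRun 0 m q (List.replicate k false) = some (q + k) := by
  induction k generalizing q with
  | zero => rfl
  | succ k ih =>
    have hstep : cernyStep 0 m q false = some (q + 1) := by grind [cernyStep]
    rw [List.replicate_succ, cernyRun_cons, hstep, Option.bind_some, ih (by omega),
      Nat.add_right_comm, Nat.add_assoc]

lemma cernyRun_zero_replicate_pred_false (hq : q ∈ Icc 1 m) :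
    cernyRun 0 m q (List.replicate (m - 1) false) = some (if q = 1 then m else q - 1) := by
  obtain ⟨hq1, hqm⟩ := mem_Icc.1 hq
  rcases hq1.eq_or_lt with rfl | hq1
  · rw [cernyRun_zero_replicate_false (by omega), if_pos rfl, Nat.add_sub_cancel' hqm]
  · have hsplit : List.replicate (m - 1) false =
        List.replicate (m - q) false ++ false :: List.replicate (q - 2) false := by
      rw [← List.replicate_succ, List.replicate_append_replicate]
      congr 1
      omega
    have hwrap : cernyStep 0 m m false = some 1 := by grind [cernyStep]
    rw [hsplit, cernyRun_append, cernyRun_zero_replicate_false (by omega), Option.bind_some,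
      Nat.add_sub_cancel' hqm, cernyRun_cons, hwrap, Option.bind_some,
      cernyRun_zero_replicate_false (by omega)]
    grind

lemma cernyRun_zero_block (hq : q ∈ Icc 1 m) :
    cernyRun 0 m q (List.replicate (m - 1) false ++ [true]) = some (max 1 (q - 1)) := by
  rw [cernyRun_append, cernyRun_zero_replicate_pred_false hq, Option.bind_some,
    cernyRun_singleton]
  grind [cernyStep]

lemma cernyRun_zero_blocks (k : ℕ) (hq : q ∈ Icc 1 m) :
    cernyRun 0 m q (List.replicate k (List.replicate (m - 1) false ++ [true])).flatten =
      some (max 1 (q - k)) := by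
  induction k generalizing q with
  | zero => grind [cernyRun]
  | succ k ih =>
    rw [List.replicate_succ, List.flatten_cons, cernyRun_append, cernyRun_zero_block hq,
      Option.bind_some, ih (by grind)]
    grind

lemma cernyRun_zero_resetWord (hq : q ∈ Icc 1 m) :
    cernyRun 0 m q (resetWord m) = some 1 := by
  rw [resetWord, cernyRun_cons, cernyStep_zero_true hq, Option.bind_some,
    cernyRun_zero_blocks _ (merge_mem_Icc hq)]
  grind [merge]

/-- The translation `a ↦ ab`, `b ↦ b` of words for `C_m^0` into words for `C_{m+1}^1` that act in
the same way on the embedded cycle. -/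
def translate (w : List Bool) : List Bool :=
  w.flatMap fun l => if l then [true] else [false, true]

lemma cernyRun_one_translate (hm : 2 ≤ m) (w : List Bool) (hq : q ∈ Icc 1 m) :
    cernyRun 1 (m + 1) (embed m q) (translate w) = (cernyRun 0 m q w).map (embed m) := by
  induction w generalizing q with
  | nil => rfl
  | cons l w ih =>
    simp only [translate, List.flatMap_cons] at ih ⊢
    rw [cernyRun_append]
    cases l
    · rw [if_neg Bool.false_ne_true, cernyRun_one_embed_false_true hq, Option.bind_some,
        ih (rotate_mem_Icc hq), cernyRun_cons, cernyStep_zero_false hq, Option.bind_some]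
    · rw [if_pos rfl, cernyRun_singleton, cernyStep_one_embed_true hm hq, Option.bind_some,
        ih (merge_mem_Icc hq), cernyRun_cons, cernyStep_zero_true hq, Option.bind_some]

lemma isSync_one_of_resetWord (hm : 2 ≤ m) :
    IsSync 1 (m + 1) (true :: translate (resetWord m)) := by
  refine ⟨embed m 1, fun q hq => ?_⟩
  have hmerge : merge (m + 1) q ∈ Icc 1 m := by grind [merge]
  rw [cernyRun_cons, cernyStep_one_true hm hq, Option.bind_some,
    cernyRun_one_translate hm _ hmerge, cernyRun_zero_resetWord hmerge, Option.map_some]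

theorem resetThreshold_zero_le {n : ℕ} (hn : 2 ≤ n) : resetThreshold 0 n ≤ (n - 1) ^ 2 :=
  Nat.sInf_le ⟨resetWord n, length_resetWord hn, 1, fun _ hq => cernyRun_zero_resetWord hq⟩

theorem sq_le_resetThreshold_one {n : ℕ} (hn : 4 ≤ n) : n ^ 2 ≤ resetThreshold 1 n + 10 := by
  obtain ⟨m, rfl⟩ : ∃ m, n = m + 1 := ⟨n - 1, by omega⟩
  obtain ⟨w, hlength, hw⟩ := Nat.sInf_mem
    (s := {L | ∃ w : List Bool, w.length = L ∧ IsSync 1 (m + 1) w})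
    ⟨_, _, rfl, isSync_one_of_resetWord (by omega)⟩
  rw [resetThreshold, ← hlength]
  exact sq_le_length_of_isSync_one (by omega) hw

end ResetWords

end Cerny

/-- **Corollary.** For every `n ≥ 6`, `r(C_n^1) > r(C_n^0)`. -/
theorem resetThreshold_one_gt_zero (n : ℕ) (hn : 6 ≤ n) :
    resetThreshold 1 n > resetThreshold 0 n := by
  have hzero : resetThreshold 0 n ≤ (n - 1) ^ 2 := Cerny.resetThreshold_zero_le (by omega)
  have hone : n ^ 2 ≤ resetThreshold 1 n + 10 := Cerny.sq_le_resetThreshold_one (by omega)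
  have hgap : (n - 1) ^ 2 + 10 < n ^ 2 := by
    obtain ⟨m, rfl⟩ : ∃ m, n = m + 1 := ⟨n - 1, by omega⟩
    rw [Nat.add_sub_cancel, add_sq]
    omega
  omega
end
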